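/- arXiv:1609.09770 — 3 statements merged into one kernel-verified Lean document; each statement's English description precedes it below -/
import Mathlib

section
/- Let a, r, N, n be positive integers with 2rN < a and N | n, and let p_{j,h} ∈ ℚ (1 ≤ j ≤ a, 0 ≤ h ≤ n/N) be the partial fraction coefficients of F. Then for all j and h, (N·d_{n/N})^{a−j} · N^{an/N} · p_{j,h} is an integer, where d_m denotes lcm(1,2,…,m). -/
/-- The rational function
`F(t) = (n/N)!^(a-2rN) (t-rn)_{rn} (t+n+1)_{rn} / ∏_{h=0}^{n/N} (t+Nh)^a`. -/
noncomputable def Frat (a r N n : ℕ) (t : ℚ) : ℚ :=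
  ((n / N).factorial : ℚ) ^ (a - 2 * r * N) *
    (ascPochhammer ℚ (r * n)).eval (t - r * n) *
    (ascPochhammer ℚ (r * n)).eval (t + n + 1) /
    ∏ h ∈ Finset.range (n / N + 1), (t + N * h) ^ a

/-- `p` is the family of partial fraction coefficients of `Frat a r N n`, i.e.
`F(t) = ∑_{h=0}^{n/N} ∑_{j=1}^a p_{j,h}/(t+Nh)^j` away from the poles. -/
def IsPartialFractionCoeffs (a r N n : ℕ) (p : ℕ → ℕ → ℚ) : Prop :=
  ∀ t : ℚ, (∀ h ∈ Finset.range (n / N + 1), t + N * h ≠ 0) →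
    Frat a r N n t =
      ∑ h ∈ Finset.range (n / N + 1), ∑ j ∈ Finset.Icc 1 a, p j h / (t + N * h) ^ j

/-- `d_m = lcm(1, 2, …, m)`. -/
def dlcm (m : ℕ) : ℕ := Finset.lcm (Finset.Icc 1 m) id

/-!
Put `m = n / N` and expand around the pole `-N h` in the variable `t = N d_m X - N h`. The
numerator of `F` becomes `m ! ^ a` times an integer polynomial: since `1, …, m` divide `N d_m`,
Chu–Vandermonde shows that `m !` divides every product `(t + c) ⋯ (t + c + m - 1)`, and each of
the two Pochhammer symbols consists of `r N` such blocks. A factor `t + N i` with `i ≠ h` becomes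
`N (i - h) (1 + d_m / (i - h) X)`, and the `i - h` multiply to a divisor of `m !`, so the
denominator away from the pole divides `m ! ^ a N ^ (a m)` times an integer polynomial with
constant term `1`. Such a polynomial is invertible modulo `X ^ a`, so after cancelling `m ! ^ a`
the numerator of the principal part at the pole, times `N ^ (a m)`, has integer coefficients
in `X`; these are `(N d_m) ^ (a - j) N ^ (a m) p_{j,h}`.
-/

open Finset Polynomial
open scoped Nat

section Pochhammer

variable {R : Type*} [CommRing R] {m : ℕ} {y : R}

lemma factorial_dvd_descPochhammer_eval (hy : ∀ l ∈ Icc 1 m, (l : R) ∣ y) :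
    (m ! : R) ∣ (descPochhammer R m).eval y := by
  rw [descPochhammer_eval_eq_prod_range]
  cases m with
  | zero => simp
  | succ m =>
    rw [prod_range_succ', Nat.factorial_succ, mul_comm, Nat.cast_mul,
      ← prod_range_add_one_eq_factorial, Nat.cast_prod]
    have hlast : ((m + 1 : ℕ) : R) ∣ y - (0 : ℕ) := by
      simpa using hy (m + 1) (by simp)
    exact mul_dvd_mul (prod_dvd_prod_of_dvd _ _ fun i hi ↦
      dvd_sub (hy _ (by grind)) dvd_rfl) hlast

-- The term `(i, j)` of Chu–Vandermonde is a multiple of `(i + j).choose i * (i ! * j !)`.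
lemma factorial_dvd_descPochhammer_eval_add_intCast (hy : ∀ l ∈ Icc 1 m, (l : R) ∣ y) (c : ℤ) :
    (m ! : R) ∣ (descPochhammer R m).eval (y + c) := by
  have smeval_eq (k : ℕ) (x : R) :
      (descPochhammer ℤ k).smeval x = (descPochhammer R k).eval x := by
    rw [← aeval_eq_smeval, ← descPochhammer_map (algebraMap ℤ R), eval_map_algebraMap]
  rw [← smeval_eq, Ring.descPochhammer_smeval_add m (Commute.all y c)]
  refine dvd_sum fun ⟨i, j⟩ hij ↦ ?_
  obtain rfl : i + j = m := by simpa using hij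
  have hi : (i ! : R) ∣ (descPochhammer R i).eval y :=
    factorial_dvd_descPochhammer_eval fun l hl ↦ hy l (by grind)
  have hj : (j ! : R) ∣ (descPochhammer R j).eval (c : R) := by
    rw [← descPochhammer_eval_cast, eval_eq_smeval, Ring.descPochhammer_eq_factorial_smul_choose]
    simp
  simp only [smeval_eq]
  rw [← Nat.choose_mul_factorial_mul_factorial (Nat.le_add_right i j), Nat.add_sub_cancel_left,
    Nat.cast_mul, Nat.cast_mul, mul_assoc]
  exact mul_dvd_mul_left _ (mul_dvd_mul hi hj)

lemma factorial_dvd_ascPochhammer_eval_add_intCast (hy : ∀ l ∈ Icc 1 m, (l : R) ∣ y) (c : ℤ) :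
    (m ! : R) ∣ (ascPochhammer R m).eval (y + c) := by
  have := factorial_dvd_descPochhammer_eval_add_intCast hy (c + m - 1)
  have hshift : y + ((c + m - 1 : ℤ) : R) - m + 1 = y + c := by
    push_cast
    ring
  rwa [descPochhammer_eval_eq_ascPochhammer, hshift] at this

lemma factorial_pow_dvd_ascPochhammer_eval_add_intCast (hy : ∀ l ∈ Icc 1 m, (l : R) ∣ y)
    {k L : ℕ} (hL : k * m ≤ L) (c : ℤ) :
    (m ! : R) ^ k ∣ (ascPochhammer R L).eval (y + c) := by
  induction k generalizing L c with
  | zero => simp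
  | succ k ih =>
    obtain ⟨L, rfl⟩ := Nat.exists_eq_add_of_le (show m ≤ L by nlinarith)
    rw [← ascPochhammer_mul, eval_mul, eval_comp, pow_succ']
    have hrest := ih (L := L) (by nlinarith) (c + m)
    refine mul_dvd_mul (factorial_dvd_ascPochhammer_eval_add_intCast hy c) ?_
    simpa [add_assoc] using hrest

end Pochhammer

section PartialFractions

variable {F ι : Type*} [Field F]

/-- `p j i` (for `1 ≤ j ≤ a` and `i ∈ s`) are the coefficients of an expansion
`Q(t) / ∏ (t + x i) ^ a = ∑ p j i / (t + x i) ^ j`. It is required only away from the poles, and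
the `x i` may coincide. -/
def HasPartialFractionExpansion (Q : F[X]) (s : Finset ι) (x : ι → F) (a : ℕ) (p : ℕ → ι → F) :
    Prop :=
  ∀ t, (∀ i ∈ s, t + x i ≠ 0) →
    Q.eval t / ∏ i ∈ s, (t + x i) ^ a = ∑ i ∈ s, ∑ j ∈ Icc 1 a, p j i / (t + x i) ^ j

/-- The numerator of the principal part `∑ c j / T ^ j` (for `1 ≤ j ≤ a`) over `T ^ a`. -/
noncomputable def polarNumerator (a : ℕ) (c : ℕ → F) : F[X] :=
  ∑ j ∈ Icc 1 a, C (c j) * X ^ (a - j)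

lemma coeff_polarNumerator {a j : ℕ} (hj : j ∈ Icc 1 a) (c : ℕ → F) :
    (polarNumerator a c).coeff (a - j) = c j := by
  rw [polarNumerator, finsetSum_coeff, sum_eq_single_of_mem j hj]
  · simp
  · intro i hi hij
    simp only [mem_Icc] at hi hj
    rw [coeff_C_mul_X_pow, if_neg (by lia)]

lemma eval_polarNumerator {T : F} (hT : T ≠ 0) (a : ℕ) (c : ℕ → F) :
    (polarNumerator a c).eval T = (∑ j ∈ Icc 1 a, c j / T ^ j) * T ^ a := by
  simp only [polarNumerator, eval_finsetSum, eval_mul, eval_C, eval_pow, eval_X, sum_mul]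
  refine sum_congr rfl fun j hj ↦ ?_
  rw [div_mul_eq_mul_div, mul_div_assoc, pow_sub₀ _ hT (mem_Icc.1 hj).2, div_eq_mul_inv]

variable [DecidableEq ι] {Q : F[X]} {s : Finset ι} {x : ι → F} {a : ℕ} {p : ℕ → ι → F}

lemma HasPartialFractionExpansion.eq_sum [Infinite F]
    (hp : HasPartialFractionExpansion Q s x a p) :
    Q = ∑ i ∈ s, (polarNumerator a (p · i)).comp (X + C (x i)) *
      ∏ i' ∈ s.erase i, (X + C (x i')) ^ a := by
  classical
  refine eq_of_infinite_eval_eq _ _ <|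
    (s.image fun i ↦ -x i).finite_toSet.infinite_compl.mono fun t ht ↦ ?_
  have hpole : ∀ i ∈ s, t + x i ≠ 0 := fun i hi h ↦
    ht (mem_image.2 ⟨i, hi, (eq_neg_of_add_eq_zero_left h).symm⟩)
  have hQ := hp t hpole
  rw [div_eq_iff (prod_ne_zero_iff.2 fun i hi ↦ pow_ne_zero _ (hpole i hi)), sum_mul] at hQ
  simp only [Set.mem_ofPred_eq, hQ, eval_finsetSum, eval_mul, eval_comp, eval_prod, eval_pow,
    eval_add, eval_X, eval_C]
  refine sum_congr rfl fun i hi ↦ ?_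
  rw [eval_polarNumerator (hpole i hi), mul_assoc, mul_prod_erase s (fun i ↦ (t + x i) ^ a) hi]

lemma HasPartialFractionExpansion.X_pow_dvd_comp_sub [Infinite F]
    (hp : HasPartialFractionExpansion Q s x a p) {i₀ : ι} (hi₀ : i₀ ∈ s) (K : F) :
    X ^ a ∣ Q.comp (C K * X - C (x i₀)) - (polarNumerator a (p · i₀)).comp (C K * X) *
      ∏ i ∈ s.erase i₀, (C K * X + C (x i - x i₀)) ^ a := by
  have hshift (i : ι) :
      (X + C (x i)).comp (C K * X - C (x i₀)) = C K * X + C (x i - x i₀) := by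
    simp only [add_comp, X_comp, C_comp, C_sub]
    ring
  rw [hp.eq_sum, Polynomial.sum_comp, ← add_sum_erase s _ hi₀]
  simp only [mul_comp, comp_assoc, Polynomial.prod_comp, pow_comp, hshift, sub_self, C_0, add_zero,
    add_sub_cancel_left]
  refine dvd_sum fun i hi ↦ Dvd.dvd.mul_left ?_ _
  have hmem : i₀ ∈ s.erase i := mem_erase.2 ⟨(ne_of_mem_erase hi).symm, hi₀⟩
  refine dvd_trans (pow_dvd_pow_of_dvd ?_ a) (dvd_prod_of_mem _ hmem)
  simp

end PartialFractions

lemma coeff_mem_range_of_X_pow_dvd_sub {R S : Type*} [CommRing R] [CommRing S] (f : R →+* S)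
    {E I : R[X]} (hE : IsUnit (E.coeff 0)) {T : S[X]} {a k : ℕ}
    (h : X ^ a ∣ T * E.map f - I.map f) (hk : k < a) : T.coeff k ∈ f.range := by
  obtain ⟨U, V, hUV⟩ : IsCoprime E (X ^ a) := by
    have hconst : IsCoprime (C (E.coeff 0)) X :=
      isCoprime_one_left.of_isCoprime_of_dvd_left (isUnit_C.2 hE).dvd
    rw [← divX_mul_X_add E, add_comm]
    exact (hconst.add_mul_right_left _).pow_right
  have hT : X ^ a ∣ T - (U * I).map f := by
    have hUV' := congr_arg (Polynomial.map f) hUV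
    simp only [Polynomial.map_add, Polynomial.map_mul, Polynomial.map_pow, map_X,
      Polynomial.map_one] at hUV' ⊢
    have : T - U.map f * I.map f =
        U.map f * (T * E.map f - I.map f) + X ^ a * (V.map f * T) := by
      linear_combination -T * hUV'
    exact this ▸ dvd_add (h.mul_left _) (dvd_mul_right _ _)
  have hcoeff := X_pow_dvd_iff.1 hT k hk
  rw [coeff_sub, coeff_map, sub_eq_zero] at hcoeff
  exact ⟨_, hcoeff.symm⟩

lemma prod_range_erase_sub {m h : ℕ} (hh : h ≤ m) :
    ∏ i ∈ (range (m + 1)).erase h, ((i : ℤ) - h) = (-1) ^ h * (h ! * (m - h)!) := by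
  induction m, hh using Nat.le_induction with
  | base =>
    have hdesc : ∏ i ∈ range h, ((h : ℤ) - i) = h ! := by
      rw [← descPochhammer_eval_eq_prod_range, descPochhammer_eval_eq_descFactorial,
        Nat.descFactorial_self]
    rw [range_add_one, erase_insert notMem_range_self,
      prod_congr rfl fun (i : ℕ) _ ↦ (neg_sub (h : ℤ) i).symm, prod_neg, hdesc]
    simp
  | succ m hm ih =>
    rw [range_add_one, erase_insert_of_ne (by lia), prod_insert (by simp), ih,
      Nat.succ_sub hm, Nat.factorial_succ]
    push_cast [hm]
    ring

lemma prod_range_erase_sub_dvd_factorial {m h : ℕ} (hh : h ≤ m) :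
    ∏ i ∈ (range (m + 1)).erase h, ((i : ℤ) - h) ∣ m ! := by
  rw [prod_range_erase_sub hh, (isUnit_neg_one.pow h).mul_left_dvd]
  exact_mod_cast Nat.factorial_mul_factorial_dvd_factorial hh

lemma exists_C_mul_prod_eq_C_mul {m h : ℕ} (hh : h ≤ m) (N : ℤ) {d : ℤ}
    (hd : ∀ l ∈ Icc 1 m, (l : ℤ) ∣ d) :
    ∃ (b : ℤ) (E : ℤ[X]), E.coeff 0 = 1 ∧
      C b * ∏ i ∈ (range (m + 1)).erase h, (C (N * d) * X + C (N * i - N * h)) =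
        C (N ^ m * m !) * E := by
  have hdvd (i : ℕ) (hi : i ∈ (range (m + 1)).erase h) : (i : ℤ) - h ∣ d := by
    rw [← Int.natAbs_dvd]
    exact hd _ (by grind)
  choose! z hz using hdvd
  obtain ⟨b, hb⟩ := prod_range_erase_sub_dvd_factorial hh
  refine ⟨b, ∏ i ∈ (range (m + 1)).erase h, (C (z i) * X + 1), ?_, ?_⟩
  · simp [coeff_zero_eq_eval_zero, eval_prod]
  have hfactor (i : ℕ) (hi : i ∈ (range (m + 1)).erase h) :
      (C (N * d) * X + C (N * i - N * h) : ℤ[X]) = C N * C (i - h : ℤ) * (C (z i) * X + 1) := by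
    rw [← mul_sub, hz i hi]
    simp only [C_mul]
    ring
  have hcard : #((range (m + 1)).erase h) = m := by
    rw [card_erase_of_mem (mem_range_succ_iff.2 hh), card_range, Nat.add_one_sub_one]
  rw [prod_congr rfl hfactor, prod_mul_distrib, prod_mul_distrib, prod_const, hcard, ← map_prod,
    hb]
  simp only [C_mul, C_pow]
  ring

section Integrality

variable {Q : ℤ[X]} {N d : ℤ} {a m h : ℕ} {p : ℕ → ℕ → ℚ}

lemma HasPartialFractionExpansion.exists_X_pow_dvd_sub
    (hp : HasPartialFractionExpansion (Q.map (Int.castRingHom ℚ)) (range (m + 1))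
      (fun i ↦ (N * i : ℚ)) a p)
    (hd : ∀ l ∈ Icc 1 m, (l : ℤ) ∣ d) (hh : h ≤ m)
    (hQ : (m ! : ℤ[X]) ^ a ∣ Q.comp (C (N * d) * X - C (N * h))) :
    ∃ E I : ℤ[X], E.coeff 0 = 1 ∧
      X ^ a ∣ C ((N : ℚ) ^ (a * m)) * (polarNumerator a (p · h)).comp (C (N * d : ℚ) * X) *
        E.map (Int.castRingHom ℚ) - I.map (Int.castRingHom ℚ) := by
  obtain ⟨b, E, hE, hbE⟩ := exists_C_mul_prod_eq_C_mul hh N hd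
  obtain ⟨I, hI⟩ := hQ
  refine ⟨E ^ a, C (b ^ a) * I, ?_, ?_⟩
  · rw [coeff_zero_eq_eval_zero, eval_pow, ← coeff_zero_eq_eval_zero, hE, one_pow]
  have hnum : (Q.map (Int.castRingHom ℚ)).comp (C (N * d : ℚ) * X - C (N * h : ℚ)) =
      (m ! : ℚ[X]) ^ a * I.map (Int.castRingHom ℚ) := by
    simpa [Polynomial.map_comp] using congr_arg (Polynomial.map (Int.castRingHom ℚ)) hI
  have hden : C (b : ℚ) ^ a *
      ∏ i ∈ (range (m + 1)).erase h, (C (N * d : ℚ) * X + C (N * i - N * h : ℚ)) ^ a =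
        C (N : ℚ) ^ (a * m) * (m ! : ℚ[X]) ^ a * E.map (Int.castRingHom ℚ) ^ a := by
    rw [prod_pow, mul_comm a m]
    simpa [Polynomial.map_prod, mul_pow, ← pow_mul] using
      congr_arg (Polynomial.map (Int.castRingHom ℚ) · ^ a) hbE
  have hexp := hp.X_pow_dvd_comp_sub (mem_range_succ_iff.2 hh) (N * d : ℚ)
  have hfact : IsUnit ((m ! : ℚ[X]) ^ a) := by
    rw [← C_eq_natCast]
    exact (isUnit_C.2 (by simp [Nat.factorial_ne_zero])).pow a
  rw [dvd_sub_comm, ← hfact.dvd_mul_left]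
  refine (hexp.mul_left (C (b : ℚ) ^ a)).trans (dvd_of_eq ?_)
  simp only [Polynomial.map_mul, Polynomial.map_pow, map_C, C_pow, eq_intCast (Int.castRingHom ℚ)]
  linear_combination C (b : ℚ) ^ a * hnum -
    (polarNumerator a (p · h)).comp (C (N * d : ℚ) * X) * hden

theorem HasPartialFractionExpansion.exists_int_eq
    (hp : HasPartialFractionExpansion (Q.map (Int.castRingHom ℚ)) (range (m + 1))
      (fun i ↦ (N * i : ℚ)) a p)
    (hd : ∀ l ∈ Icc 1 m, (l : ℤ) ∣ d) (hh : h ≤ m)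
    (hQ : (m ! : ℤ[X]) ^ a ∣ Q.comp (C (N * d) * X - C (N * h))) {j : ℕ} (hj : j ∈ Icc 1 a) :
    ∃ z : ℤ, (N * d : ℚ) ^ (a - j) * (N : ℚ) ^ (a * m) * p j h = z := by
  obtain ⟨E, I, hE, hcong⟩ := hp.exists_X_pow_dvd_sub hd hh hQ
  obtain ⟨z, hz⟩ := coeff_mem_range_of_X_pow_dvd_sub (Int.castRingHom ℚ) (hE ▸ isUnit_one) hcong
    (show a - j < a by grind)
  rw [coeff_C_mul, comp_C_mul_X_coeff, coeff_polarNumerator hj, eq_intCast] at hz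
  exact ⟨z, by rw [hz]; ring⟩

end Integrality

lemma factorial_pow_dvd_ascPochhammer_comp {m k L : ℕ} {y : ℤ}
    (hy : ∀ l ∈ Icc 1 m, (l : ℤ) ∣ y) (hL : k * m ≤ L) (u c : ℤ) :
    (m ! : ℤ[X]) ^ k ∣ ((ascPochhammer ℤ L).comp (X + C u)).comp (C y * X - C c) := by
  have hdvd (l : ℕ) (hl : l ∈ Icc 1 m) : (l : ℤ[X]) ∣ C y * X :=
    Dvd.dvd.mul_right (by simpa using map_dvd C (hy l hl)) X
  convert factorial_pow_dvd_ascPochhammer_eval_add_intCast hdvd hL (u - c) using 1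
  have hshift : C y * X + ((u - c : ℤ) : ℤ[X]) = (X + C u).comp (C y * X - C c) := by
    simp only [add_comp, X_comp, intCast_comp, eq_intCast, Int.cast_sub]
    ring
  rw [hshift, comp_assoc, comp, ← algebraMap_eq (R := ℤ), ← ascPochhammer_eval₂]

theorem partial_fraction_coefficients_integrality_general {a e k k' m N L L' : ℕ} {u u' : ℤ}
    (ha : a ≤ e + k + k') (hL : k * m ≤ L) (hL' : k' * m ≤ L') {p : ℕ → ℕ → ℚ}
    (hp : HasPartialFractionExpansion (C (m ! : ℚ) ^ e * (ascPochhammer ℚ L).comp (X + C (u : ℚ)) *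
      (ascPochhammer ℚ L').comp (X + C (u' : ℚ))) (range (m + 1)) (fun i ↦ (N * i : ℚ)) a p) :
    ∀ j ∈ Icc 1 a, ∀ h ∈ range (m + 1),
      ∃ z : ℤ, ((N * dlcm m : ℕ) : ℚ) ^ (a - j) * (N : ℚ) ^ (a * m) * p j h = z := by
  intro j hj h hh
  have hd (l : ℕ) (hl : l ∈ Icc 1 m) : (l : ℤ) ∣ dlcm m := mod_cast dvd_lcm (f := id) hl
  have hNd (l : ℕ) (hl : l ∈ Icc 1 m) : (l : ℤ) ∣ N * dlcm m := (hd l hl).mul_left _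
  let Q : ℤ[X] := (m ! : ℤ[X]) ^ e * (ascPochhammer ℤ L).comp (X + C u) *
    (ascPochhammer ℤ L').comp (X + C u')
  have hQ : (m ! : ℤ[X]) ^ a ∣ Q.comp (C (N * dlcm m : ℤ) * X - C (N * h : ℤ)) := by
    refine (pow_dvd_pow _ ha).trans ?_
    rw [pow_add, pow_add, mul_comp, mul_comp]
    exact mul_dvd_mul (mul_dvd_mul (by simp) (factorial_pow_dvd_ascPochhammer_comp hNd hL _ _))
      (factorial_pow_dvd_ascPochhammer_comp hNd hL' _ _)
  have hpQ : HasPartialFractionExpansion (Q.map (Int.castRingHom ℚ)) (range (m + 1))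
      (fun i ↦ ((N : ℤ) * i : ℚ)) a p := by
    simpa [Q, Polynomial.map_comp] using hp
  simpa using hpQ.exists_int_eq hd (mem_range_succ_iff.1 hh) hQ hj

/-- Let `a, r, N, n` be positive integers with `2rN < a` and `N ∣ n`, and let `p_{j,h}`
be the partial fraction coefficients of `F`. Then `(N d_{n/N})^{a-j} N^{an/N} p_{j,h} ∈ ℤ`
for all `1 ≤ j ≤ a` and `0 ≤ h ≤ n/N`. -/
theorem partial_fraction_coefficients_integrality
    (a r N n : ℕ) (ha : 0 < a) (hr : 0 < r) (hN : 0 < N) (hn : 0 < n)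
    (hra : 2 * r * N < a) (hNn : N ∣ n)
    (p : ℕ → ℕ → ℚ) (hp : IsPartialFractionCoeffs a r N n p) :
    ∀ j ∈ Finset.Icc 1 a, ∀ h ∈ Finset.range (n / N + 1),
      ∃ z : ℤ, ((N * dlcm (n / N) : ℕ) : ℚ) ^ (a - j) * ((N : ℚ)) ^ (a * (n / N)) * p j h
        = (z : ℚ) := by
  have hblock : r * N * (n / N) ≤ r * n := by rw [mul_assoc, Nat.mul_div_cancel' hNn]
  refine partial_fraction_coefficients_integrality_general (e := a - 2 * r * N) (u := -(r * n))
    (u' := n + 1) (by lia) hblock hblock fun t ht ↦ ?_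
  simpa [Frat, ← sub_eq_add_neg, add_assoc] using hp t ht
end

section
/- Let a, r, N, n be positive integers with 2rN < a and N | n, set d₀ = a(n/N + 1) − 2rn, and let P_{k,j}, U_k, V_k be defined by the recursions P_{1,j} = P_j, P_{k,j} = P'_{k−1,j} − (1/z)P_{k−1,j+1} (with P_{k−1,a+1} = 0), U₁ = U, U_k = U'_{k−1} − P_{k−1,1}/(1−z), V₁ = V, V_k = V'_{k−1} + P_{k−1,1}/(z(1−z)). Then for every k with 1 ≤ k ≤ d₀ − 1 and every j with 1 ≤ j ≤ a: (i) z^{k−1} P_{k,j}(z) is a polynomial in z^N of degree at most n (as a polynomial in z), with all coefficients in δ_n^{−1}ℤ where δ_n = (N d_n)^a N^{an/N} and d_n = lcm(1,…,n); (ii) writing z^{k−1}U_k(z) = ∑_{λ=0}^{N−1} z^λ U_{k,λ}(z) and z^{k−1}V_k(z) = ∑_{λ=0}^{N−1} z^λ V_{k,λ}(z) with U_{k,λ}, V_{k,λ} ∈ ℚ[z^N, z^{−N}], the functions U_{k,λ} and V_{k,λ} are polynomials in z^N of degree at most n with all coefficients in δ_n^{−1}ℤ. -/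
/-- `P_j(z) = ∑_{h=0}^{n/N} p_{j,h} z^{Nh}` for `1 ≤ j ≤ a`, and `0` otherwise. -/
noncomputable def Ppoly (a N n : ℕ) (p : ℕ → ℕ → ℚ) (j : ℕ) : Polynomial ℚ :=
  if 1 ≤ j ∧ j ≤ a then
    ∑ h ∈ Finset.range (n / N + 1), Polynomial.C (p j h) * Polynomial.X ^ (N * h)
  else 0

noncomputable def Upoly (a N n : ℕ) (p : ℕ → ℕ → ℚ) : Polynomial ℚ :=
  -∑ t ∈ Finset.Icc 1 n,
    Polynomial.C (∑ j ∈ Finset.Icc 1 a, ∑ h ∈ Finset.range ((t - 1) / N + 1),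
      p j h / ((t : ℚ) - N * h) ^ j) * Polynomial.X ^ t

noncomputable def Vpoly (a N n : ℕ) (p : ℕ → ℕ → ℚ) : Polynomial ℚ :=
  -∑ t ∈ Finset.range n,
    Polynomial.C (∑ j ∈ Finset.Icc 1 a, ∑ h ∈ Finset.Icc ((t + N) / N) (n / N),
      p j h / ((N * h : ℚ) - t) ^ j) * Polynomial.X ^ t

/-- Derivative of a rational function. -/
noncomputable def ratDeriv (f : RatFunc ℚ) : RatFunc ℚ :=
  RatFunc.mk (Polynomial.derivative f.num * f.denom - f.num * Polynomial.derivative f.denom)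
    (f.denom ^ 2)

/-- `P_{k,j}` (with `k` shifted: `PPk k j = P_{k+1,j}`), defined by `P_{1,j} = P_j` and
`P_{k,j} = P'_{k-1,j} - (1/z) P_{k-1,j+1}`, where `P_{k-1,a+1} = 0`. -/
noncomputable def PPk (a N n : ℕ) (p : ℕ → ℕ → ℚ) : ℕ → ℕ → RatFunc ℚ
  | 0, j => algebraMap (Polynomial ℚ) (RatFunc ℚ) (Ppoly a N n p j)
  | k + 1, j => ratDeriv (PPk a N n p k j) - (1 / RatFunc.X) * PPk a N n p k (j + 1)

/-- `U_k` (with `k` shifted: `UkF k = U_{k+1}`): `U₁ = U`, `U_k = U'_{k-1} - P_{k-1,1}/(1-z)`. -/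
noncomputable def UkF (a N n : ℕ) (p : ℕ → ℕ → ℚ) : ℕ → RatFunc ℚ
  | 0 => algebraMap (Polynomial ℚ) (RatFunc ℚ) (Upoly a N n p)
  | k + 1 => ratDeriv (UkF a N n p k) - (1 / (1 - RatFunc.X)) * PPk a N n p k 1

/-- `V_k` (with `k` shifted: `VkF k = V_{k+1}`): `V₁ = V`, `V_k = V'_{k-1} + P_{k-1,1}/(z(1-z))`. -/
noncomputable def VkF (a N n : ℕ) (p : ℕ → ℕ → ℚ) : ℕ → RatFunc ℚ
  | 0 => algebraMap (Polynomial ℚ) (RatFunc ℚ) (Vpoly a N n p)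
  | k + 1 => ratDeriv (VkF a N n p k) + (1 / (RatFunc.X * (1 - RatFunc.X))) * PPk a N n p k 1

/-- `δ_n = (N d_n)^a N^{an/N}`. -/
def deltan (a N n : ℕ) : ℕ := (N * dlcm n) ^ a * N ^ (a * (n / N))

/-!
Write `n = N * m` and `d = dlcm n`. Substituting `t = X - N * i` in the fraction and multiplying
by `X ^ a` gives a power series whose coefficient of `X ^ (a - j)` is `p j i`. Its numerator is
`m! ^ a` times a product of generalized binomial coefficients `multichoose (X + c) m`. These, and
also `N ^ m * m! / ∏_{h ≠ i} (X + N * (h - i))`, become integral after rescaling `X` to `d * X`,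
so that `N ^ (a * m) * d ^ (a - j) * p j i` is an integer.

The recursion for `z ^ k * P_{k+1,j}` corresponds to multiplying the fraction by `-(t + k)`. As
long as the resulting degree is at most `-2` the residues sum to zero, that is,
`P_{k+1,1}(1) = 0`. Hence the divisions by `1 - z` in the recursions for `U_k` and `V_k` preserve
polynomials with coefficients in `δ⁻¹ℤ`.
-/

open Finset

lemma prod_erase_range_sub {m i : ℕ} (hi : i ≤ m) :
    ∏ h ∈ (range (m + 1)).erase i, ((h : ℤ) - i) =
      (-1) ^ i * (i.factorial * (m - i).factorial) := by
  obtain ⟨k, rfl⟩ := Nat.exists_eq_add_of_le hi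
  have hsplit : (range (i + k + 1)).erase i = range i ∪ Ico (i + 1) (i + 1 + k) := by
    ext h
    simp only [mem_erase, mem_range, mem_union, mem_Ico]
    omega
  have hbelow : ∏ h ∈ range i, ((h : ℤ) - i) = (-1) ^ i * i.factorial := by
    rw [← prod_range_add_one_eq_factorial, ← prod_range_reflect, Nat.cast_prod, ← card_range i,
      ← prod_const, card_range, ← prod_mul_distrib]
    refine prod_congr rfl fun h hh ↦ ?_
    have := mem_range.mp hh
    push_cast [show i - 1 - h = i - (h + 1) by omega, Nat.cast_sub (show h + 1 ≤ i by omega)]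
    ring
  have habove : ∏ h ∈ Ico (i + 1) (i + 1 + k), ((h : ℤ) - i) = k.factorial := by
    rw [prod_Ico_eq_prod_range, ← prod_range_add_one_eq_factorial, Nat.cast_prod]
    refine prod_congr (by rw [Nat.add_sub_cancel_left]) fun h _ ↦ ?_
    push_cast
    ring
  rw [hsplit, prod_union, hbelow, habove, Nat.add_sub_cancel_left, mul_assoc]
  exact disjoint_left.mpr fun h hh ↦ by
    simp only [mem_range, mem_Ico] at hh ⊢
    omega

section Pochhammer

variable {R : Type*} [CommRing R] [BinomialRing R]

lemma factorial_mul_multichoose (x : R) (m : ℕ) :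
    (m.factorial : R) * Ring.multichoose x m = (ascPochhammer R m).eval x := by
  rw [← nsmul_eq_mul, Ring.factorial_nsmul_multichoose_eq_ascPochhammer,
    Polynomial.ascPochhammer_smeval_eq_eval]

lemma ascPochhammer_eval_mul_eq (m q : ℕ) (x : R) :
    (ascPochhammer R (m * q)).eval x =
      (m.factorial : R) ^ q * ∏ i ∈ range q, Ring.multichoose (x + (m * i : ℕ)) m := by
  induction q with
  | zero => simp
  | succ q ih =>
    rw [Nat.mul_succ, ← ascPochhammer_mul, Polynomial.eval_mul, ih, Polynomial.eval_comp,
      Polynomial.eval_add, Polynomial.eval_X, Polynomial.eval_natCast,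
      ← factorial_mul_multichoose, prod_range_succ]
    ring

end Pochhammer

section IntegralSeries

open PowerSeries

/-- The power series `f` over `ℚ` for which `f(dX)` has integer coefficients. -/
noncomputable def integralAfterRescale (d : ℤ) : Subring ℚ⟦X⟧ :=
  (PowerSeries.map (Int.castRingHom ℚ)).range.comap (rescale (d : ℚ))

variable {d : ℤ}

lemma exists_int_of_mem_integralAfterRescale {f : ℚ⟦X⟧} (hf : f ∈ integralAfterRescale d)
    (l : ℕ) : ∃ z : ℤ, (d : ℚ) ^ l * coeff l f = z := by
  obtain ⟨g, hg⟩ := hf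
  exact ⟨coeff l g, by simpa using (congrArg (coeff l) hg).symm⟩

lemma inv_mem_integralAfterRescale {f : ℚ⟦X⟧} (hf : f ∈ integralAfterRescale d)
    (hf1 : constantCoeff f = 1) : f⁻¹ ∈ integralAfterRescale d := by
  obtain ⟨g, hg⟩ := hf
  have hg1 : constantCoeff g = 1 := by simpa [hf1] using congrArg (coeff 0) hg
  have hgf : PowerSeries.map (Int.castRingHom ℚ) (invOfUnit g 1) * rescale (d : ℚ) f = 1 := by
    rw [← hg, ← map_mul, invOfUnit_mul g 1 hg1, map_one]
  have hff : rescale (d : ℚ) f * rescale (d : ℚ) f⁻¹ = 1 := by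
    rw [← map_mul, PowerSeries.mul_inv_cancel f (by simp [hf1]), map_one]
  exact ⟨invOfUnit g 1, left_inv_eq_right_inv hgf hff⟩

lemma one_add_C_inv_mul_X_mem {c : ℤ} (hcd : c ∣ d) :
    1 + C (c : ℚ)⁻¹ * X ∈ integralAfterRescale d := by
  obtain ⟨e, rfl⟩ := hcd
  rcases eq_or_ne (c : ℚ) 0 with hc | hc
  · simp [hc, one_mem]
  · refine add_mem (one_mem _) ⟨monomial 1 e, ?_⟩
    ext l
    rw [coeff_map, coeff_monomial, coeff_rescale, coeff_C_mul, coeff_X]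
    split_ifs with hl
    · rw [hl, pow_one, mul_one, Int.cast_mul, eq_intCast]
      field_simp
    · simp

lemma C_mul_inv_prod_X_add_C_mem {ι : Type*} {s : Finset ι} {b : ι → ℤ} {M : ℤ}
    (hb : ∀ i ∈ s, b i ≠ 0) (hbd : ∀ i ∈ s, b i ∣ d) (hM : ∏ i ∈ s, b i ∣ M) :
    C (M : ℚ) * (∏ i ∈ s, (X + C (b i : ℚ)))⁻¹ ∈ integralAfterRescale d := by
  obtain ⟨e, rfl⟩ := hM
  set g : ℚ⟦X⟧ := ∏ i ∈ s, (1 + C (b i : ℚ)⁻¹ * X) with hg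
  have hg1 : constantCoeff g = 1 := by simp [g, map_prod]
  have hprod : ∏ i ∈ s, (X + C (b i : ℚ)) = C ((∏ i ∈ s, b i : ℤ) : ℚ) * g := by
    rw [hg, Int.cast_prod, map_prod, ← prod_mul_distrib]
    refine prod_congr rfl fun i hi ↦ ?_
    have hbi : (b i : ℚ) ≠ 0 := mod_cast hb i hi
    rw [mul_add, ← mul_assoc, ← map_mul, mul_inv_cancel₀ hbi, map_one, one_mul, mul_one, add_comm]
  have hB : ((∏ i ∈ s, b i : ℤ) : ℚ) ≠ 0 := mod_cast prod_ne_zero_iff.mpr hb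
  have hquot : C (((∏ i ∈ s, b i) * e : ℤ) : ℚ) * (∏ i ∈ s, (X + C (b i : ℚ)))⁻¹ =
      C (e : ℚ) * g⁻¹ := by
    rw [hprod, eq_comm, eq_mul_inv_iff_mul_eq (by simpa [hg1] using hB), Int.cast_mul, map_mul]
    linear_combination (C ((∏ i ∈ s, b i : ℤ) : ℚ) * C (e : ℚ)) *
      PowerSeries.inv_mul_cancel g (by simp [hg1])
  rw [hquot, map_intCast]
  exact mul_mem (intCast_mem _ e) (inv_mem_integralAfterRescale
    (prod_mem fun i hi ↦ one_add_C_inv_mul_X_mem (hbd i hi)) hg1)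

lemma multichoose_X_add_one (m : ℕ) :
    Ring.multichoose (X + 1 : ℚ⟦X⟧) m =
      ∏ i ∈ range m, (1 + C (((i + 1 : ℕ) : ℤ) : ℚ)⁻¹ * X) := by
  have := algebraRat.charZero ℚ⟦X⟧
  suffices h : (ascPochhammer ℚ⟦X⟧ m).eval (X + 1) =
      m.factorial * ∏ i ∈ range m, (1 + C (((i + 1 : ℕ) : ℤ) : ℚ)⁻¹ * X) from
    mul_left_cancel₀ (Nat.cast_ne_zero.mpr m.factorial_ne_zero)
      ((factorial_mul_multichoose _ m).trans h)
  induction m with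
  | zero => simp
  | succ m ih =>
    have hC : ((m : ℚ⟦X⟧) + 1) * C (((m + 1 : ℕ) : ℤ) : ℚ)⁻¹ = 1 := by
      have : (m : ℚ⟦X⟧) + 1 = C (((m + 1 : ℕ) : ℤ) : ℚ) := by simp
      rw [this, ← map_mul, mul_inv_cancel₀ (by positivity), map_one]
    rw [ascPochhammer_succ_eval, ih, prod_range_succ, Nat.factorial_succ]
    push_cast at hC ⊢
    linear_combination
      (-∏ i ∈ range m, (1 + C ((i + 1 : ℚ))⁻¹ * X : ℚ⟦X⟧)) * m.factorial * X * hC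

lemma multichoose_X_add_intCast_mem {m : ℕ} (hd : ∀ i ∈ Icc 1 m, (i : ℤ) ∣ d) (c : ℤ) :
    Ring.multichoose (X + (c : ℚ⟦X⟧)) m ∈ integralAfterRescale d := by
  induction m generalizing c with
  | zero => simp [one_mem]
  | succ m ih =>
    have ih' := ih fun i hi ↦ hd i (Icc_subset_Icc_right m.le_succ hi)
    have hrec (c : ℤ) : Ring.multichoose (X + ((c + 1 : ℤ) : ℚ⟦X⟧)) (m + 1) =
        Ring.multichoose (X + (c : ℚ⟦X⟧)) (m + 1) +
          Ring.multichoose (X + ((c + 1 : ℤ) : ℚ⟦X⟧)) m := by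
      rw [Int.cast_add, Int.cast_one, ← add_assoc, Ring.multichoose_succ_succ]
    induction c using Int.inductionOn' (b := 1) with
    | zero =>
      rw [Int.cast_one, multichoose_X_add_one]
      exact prod_mem fun i hi ↦
        one_add_C_inv_mul_X_mem (hd _ (mem_Icc.mpr ⟨by omega, mem_range.mp hi⟩))
    | succ c _ hc => exact hrec c ▸ add_mem hc (ih' _)
    | pred c _ hc =>
      have h := hrec (c - 1)
      rw [sub_add_cancel] at h
      exact (eq_sub_of_add_eq h.symm) ▸ sub_mem hc (ih' _)

end IntegralSeries

open Polynomial

section DerivedCoefficients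

variable {ι R : Type*} [CommRing R]

/-- The coefficient of `z ^ e h` in `z ^ k * P_{k+1,j}(z)`, when `c j h` is its coefficient in
`P_{1,j}(z)`. In terms of the fraction `∑ h, ∑ j, c j h / (t + e h) ^ j`, the step from `k` to
`k + 1` is multiplication by `-(t + k)` followed by removal of the constant part. -/
def derivedCoeff (e : ι → ℕ) (c : ℕ → ι → R) : ℕ → ℕ → ι → R
  | 0, j, h => c j h
  | k + 1, j, h => ((e h : R) - k) * derivedCoeff e c k j h - derivedCoeff e c k (j + 1) h

variable {e : ι → ℕ} {c : ℕ → ι → R}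

lemma derivedCoeff_eq_zero {a : ℕ} (hc : ∀ j h, a < j → c j h = 0) (k : ℕ) {j : ℕ} (hj : a < j)
    (h : ι) : derivedCoeff e c k j h = 0 := by
  induction k generalizing j with
  | zero => exact hc j h hj
  | succ k ih => rw [derivedCoeff, ih hj, ih (by omega), mul_zero, sub_zero]

lemma derivedCoeff_mem {M : AddSubgroup R} {h : ι} (hc : ∀ j, c j h ∈ M) (k j : ℕ) :
    derivedCoeff e c k j h ∈ M := by
  induction k generalizing j with
  | zero => exact hc j
  | succ k ih =>
    rw [derivedCoeff, sub_mul, ← nsmul_eq_mul, ← nsmul_eq_mul]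
    exact sub_mem (sub_mem (nsmul_mem (ih j) _) (nsmul_mem (ih j) _)) (ih (j + 1))

end DerivedCoefficients

section PartialFractions

variable {ι R : Type*} [DecidableEq ι] [CommRing R]

/-- The numerator of `∑ h ∈ s, ∑ j ∈ Icc 1 a, c j h / (X + x h) ^ j` over the common denominator
`(∏ h ∈ s, (X + x h)) ^ a`. -/
noncomputable def partialFractionNumerator (s : Finset ι) (x : ι → R) (a : ℕ)
    (c : ℕ → ι → R) : R[X] :=
  ∑ h ∈ s, ∑ j ∈ Icc 1 a,
    C (c j h) * ((X + C (x h)) ^ (a - j) * (∏ i ∈ s.erase h, (X + C (x i))) ^ a)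

variable {s : Finset ι} {x : ι → R} {a : ℕ} {c : ℕ → ι → R} {e : ι → ℕ}

lemma eq_partialFractionNumerator {K : Type*} [Field K] [Infinite K] {x : ι → K}
    {c : ℕ → ι → K} {q : K[X]}
    (hq : ∀ t, (∀ h ∈ s, t + x h ≠ 0) →
      q.eval t / ∏ h ∈ s, (t + x h) ^ a = ∑ h ∈ s, ∑ j ∈ Icc 1 a, c j h / (t + x h) ^ j) :
    q = partialFractionNumerator s x a c := by
  have hinf : {t | ∀ h ∈ s, t + x h ≠ 0}.Infinite := by
    have hsub : ((fun h ↦ -x h) '' (s : Set ι))ᶜ ⊆ {t | ∀ h ∈ s, t + x h ≠ 0} :=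
      fun t ht h hh h0 ↦ ht ⟨h, hh, (eq_neg_of_add_eq_zero_left h0).symm⟩
    exact (s.finite_toSet.image _).infinite_compl.mono hsub
  refine eq_of_infinite_eval_eq _ _ (hinf.mono fun t ht ↦ ?_)
  have hden : ∏ h ∈ s, (t + x h) ^ a ≠ 0 := prod_ne_zero_iff.mpr fun h hh ↦ pow_ne_zero _ (ht h hh)
  rw [Set.mem_ofPred_eq, (div_eq_iff hden).mp (hq t ht), partialFractionNumerator,
    eval_finsetSum, sum_mul]
  refine sum_congr rfl fun h hh ↦ ?_
  rw [eval_finsetSum, sum_mul]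
  refine sum_congr rfl fun j hj ↦ ?_
  rw [← mul_prod_erase s _ hh, prod_pow, ← pow_sub_mul_pow _ (mem_Icc.mp hj).2]
  simp only [eval_mul, eval_C, eval_pow, eval_add, eval_X, eval_prod]
  field_simp [ht h hh]

lemma coeff_partialFractionNumerator_mul_card_sub_one (ha : 0 < a) :
    (partialFractionNumerator s x a c).coeff (a * #s - 1) = ∑ h ∈ s, c 1 h := by
  nontriviality R
  rw [partialFractionNumerator, finsetSum_coeff]
  refine sum_congr rfl fun h hh ↦ ?_
  have hmonic (j : ℕ) :
      ((X + C (x h)) ^ (a - j) * (∏ i ∈ s.erase h, (X + C (x i))) ^ a).Monic :=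
    ((monic_X_add_C _).pow _).mul ((monic_prod_of_monic _ _ fun i _ ↦ monic_X_add_C (x i)).pow _)
  have hdeg (j : ℕ) (hj : j ≤ a) :
      ((X + C (x h)) ^ (a - j) * (∏ i ∈ s.erase h, (X + C (x i))) ^ a).natDegree + j =
        a * #s := by
    have hprod : (∏ i ∈ s.erase h, (X + C (x i))).Monic :=
      monic_prod_of_monic _ _ fun i _ ↦ monic_X_add_C (x i)
    rw [((monic_X_add_C _).pow _).natDegree_mul (hprod.pow _), (monic_X_add_C _).natDegree_pow,
      hprod.natDegree_pow, natDegree_prod_of_monic _ _ fun i _ ↦ monic_X_add_C (x i)]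
    simp only [natDegree_X_add_C, sum_const, smul_eq_mul, mul_one]
    rw [← card_erase_add_one hh, Nat.mul_succ]
    omega
  rw [finsetSum_coeff, sum_eq_single_of_mem 1 (mem_Icc.mpr ⟨le_rfl, ha⟩)]
  · rw [coeff_C_mul, Nat.sub_eq_of_eq_add (hdeg 1 ha).symm, (hmonic 1).coeff_natDegree, mul_one]
  · intro j hj hj1
    have := hdeg j (mem_Icc.mp hj).2
    rw [coeff_C_mul, coeff_eq_zero_of_natDegree_lt, mul_zero]
    have := (mem_Icc.mp hj).1
    omega

lemma sum_eq_zero_of_natDegree_partialFractionNumerator_lt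
    (h : (partialFractionNumerator s x a c).natDegree + 1 < a * #s) : ∑ h ∈ s, c 1 h = 0 := by
  have ha : 0 < a := pos_of_mul_pos_left (Nat.zero_lt_of_lt h) (Nat.zero_le _)
  rw [← coeff_partialFractionNumerator_mul_card_sub_one (x := x) ha,
    coeff_eq_zero_of_natDegree_lt (by omega)]

lemma coeff_aeval_partialFractionNumerator_mul_pow {W : PowerSeries R} {i : ι} (hi : i ∈ s)
    (hW : (∏ h ∈ s.erase i, (PowerSeries.X + PowerSeries.C (x h - x i))) * W = 1)
    {j : ℕ} (hj : j ∈ Icc 1 a) :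
    PowerSeries.coeff (a - j) (aeval (PowerSeries.X - PowerSeries.C (x i))
      (partialFractionNumerator s x a c) * W ^ a) = c j i := by
  have hja := mem_Icc.mp hj
  have hfac (h : ι) : aeval (PowerSeries.X - PowerSeries.C (x i)) (X + C (x h)) =
      PowerSeries.X + PowerSeries.C (x h - x i) := by
    rw [map_add, aeval_X, aeval_C, map_sub, PowerSeries.algebraMap_apply, Algebra.algebraMap_self,
      RingHom.id_apply]
    ring
  -- `X - x i` turns the `i`-th factor into `X`, so the terms `h ≠ i` are divisible by `X ^ a`.
  rw [partialFractionNumerator, map_sum, sum_mul, map_sum, sum_eq_single_of_mem i hi]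
  · rw [map_sum, sum_mul, map_sum, sum_eq_single_of_mem j hj]
    · simp only [map_mul, map_pow, map_prod, hfac, mul_assoc, ← mul_pow, hW]
      simp [PowerSeries.coeff_X_pow]
    · intro l hl hlj
      have hl := mem_Icc.mp hl
      simp only [map_mul, map_pow, map_prod, hfac, mul_assoc, ← mul_pow, hW]
      simp [PowerSeries.coeff_X_pow, show a - j ≠ a - l by omega]
  · intro h _ hhi
    refine PowerSeries.X_pow_dvd_iff.mp ?_ _ (show a - j < a by omega)
    rw [map_sum]
    refine dvd_mul_of_dvd_left (dvd_sum fun l _ ↦ ?_) _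
    have hX : PowerSeries.X ∣ ∏ k ∈ s.erase h, (PowerSeries.X + PowerSeries.C (x k - x i)) := by
      refine Dvd.dvd.trans ?_ (dvd_prod_of_mem _ (mem_erase.mpr ⟨hhi.symm, hi⟩))
      rw [sub_self, map_zero, add_zero]
    simp only [map_mul, map_pow, map_prod, hfac]
    exact dvd_mul_of_dvd_right (dvd_mul_of_dvd_right (pow_dvd_pow_of_dvd hX a) _) _

lemma sum_C_succ_mul_pow_sub {y : R[X]} {b : ℕ → R} (hb : b (a + 1) = 0) :
    ∑ j ∈ Icc 1 a, C (b (j + 1)) * y ^ (a - j) =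
      y * ∑ j ∈ Icc 1 a, C (b j) * y ^ (a - j) - C (b 1) * y ^ a := by
  have hIcc (f : ℕ → R[X]) : ∑ j ∈ Icc 1 a, f j = ∑ i ∈ range a, f (i + 1) := by
    rw [range_eq_Ico, sum_Ico_add' f 0 a 1]
    rfl
  have hshift := (sum_range_succ (fun i ↦ C (b (i + 1)) * y ^ (a - i)) a).symm.trans
    (sum_range_succ' (fun i ↦ C (b (i + 1)) * y ^ (a - i)) a)
  simp only [hb, map_zero, zero_mul, add_zero, zero_add, Nat.sub_zero] at hshift
  rw [hIcc, hIcc, mul_sum, eq_sub_iff_add_eq, ← hshift]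
  refine sum_congr rfl fun i hi ↦ ?_
  rw [mul_left_comm, ← pow_succ', show a - (i + 1) + 1 = a - i by have := mem_range.mp hi; omega]

lemma partialFractionNumerator_derivedCoeff_succ (hc : ∀ j h, a < j → c j h = 0) (k : ℕ) :
    partialFractionNumerator s (fun h ↦ (e h : R)) a (derivedCoeff e c (k + 1)) =
      C (∑ h ∈ s, derivedCoeff e c k 1 h) * (∏ h ∈ s, (X + C (e h : R))) ^ a -
        (X + C (k : R)) *
          partialFractionNumerator s (fun h ↦ (e h : R)) a (derivedCoeff e c k) := by
  simp only [partialFractionNumerator, ← mul_assoc, ← sum_mul, map_sum]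
  rw [sum_mul, mul_sum, ← sum_sub_distrib]
  refine sum_congr rfl fun h hh ↦ ?_
  have hrec : ∑ j ∈ Icc 1 a, C (derivedCoeff e c (k + 1) j h) * (X + C (e h : R)) ^ (a - j) =
      C ((e h : R) - k) * ∑ j ∈ Icc 1 a, C (derivedCoeff e c k j h) * (X + C (e h : R)) ^ (a - j) -
        ∑ j ∈ Icc 1 a, C (derivedCoeff e c k (j + 1) h) * (X + C (e h : R)) ^ (a - j) := by
    rw [mul_sum, ← sum_sub_distrib]
    refine sum_congr rfl fun j _ ↦ ?_
    rw [derivedCoeff, C_sub, C_mul]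
    ring
  rw [hrec, sum_C_succ_mul_pow_sub (b := fun j ↦ derivedCoeff e c k j h)
    (derivedCoeff_eq_zero hc k a.lt_succ_self h), ← mul_prod_erase s _ hh, mul_pow, C_sub]
  ring

lemma natDegree_partialFractionNumerator_derivedCoeff_le (hc : ∀ j h, a < j → c j h = 0) {k : ℕ}
    (hk : k + (partialFractionNumerator s (fun h ↦ (e h : R)) a c).natDegree < a * #s) :
    (partialFractionNumerator s (fun h ↦ (e h : R)) a (derivedCoeff e c k)).natDegree ≤
      k + (partialFractionNumerator s (fun h ↦ (e h : R)) a c).natDegree := by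
  induction k with
  | zero => exact (Nat.zero_add _).ge
  | succ k ih =>
    have ih := ih (by omega)
    rw [partialFractionNumerator_derivedCoeff_succ hc,
      sum_eq_zero_of_natDegree_partialFractionNumerator_lt ((Nat.add_le_add_right ih 1).trans_lt
        (by omega)), map_zero, zero_mul, zero_sub, natDegree_neg]
    have hX : (X + C (k : R)).natDegree ≤ 1 := (natDegree_add_C).trans_le natDegree_X_le
    exact natDegree_mul_le.trans (by omega)

lemma sum_derivedCoeff_one_eq_zero (hc : ∀ j h, a < j → c j h = 0) {k : ℕ}
    (hk : k + (partialFractionNumerator s (fun h ↦ (e h : R)) a c).natDegree + 1 < a * #s) :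
    ∑ h ∈ s, derivedCoeff e c k 1 h = 0 :=
  sum_eq_zero_of_natDegree_partialFractionNumerator_lt (x := fun h ↦ (e h : R)) (a := a) <| by
    have := natDegree_partialFractionNumerator_derivedCoeff_le hc (Nat.lt_of_succ_lt hk)
    omega

end PartialFractions

section Frat

open scoped PowerSeries

lemma exists_aeval_ascPochhammer_eq {m : ℕ} {d : ℤ} (hd : ∀ i ∈ Icc 1 m, (i : ℤ) ∣ d) (q : ℕ)
    (c : ℤ) : ∃ g ∈ integralAfterRescale d,
      aeval (PowerSeries.X + (c : ℚ⟦X⟧)) (ascPochhammer ℚ (m * q)) =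
        (m.factorial : ℚ⟦X⟧) ^ q * g := by
  refine ⟨∏ i ∈ range q, Ring.multichoose (PowerSeries.X + (c : ℚ⟦X⟧) + ((m * i : ℕ) : ℚ⟦X⟧)) m,
    prod_mem fun i _ ↦ ?_, ?_⟩
  · rw [add_assoc, ← Int.cast_natCast, ← Int.cast_add]
    exact multichoose_X_add_intCast_mem hd _
  · rw [aeval_def, ← ascPochhammer_eval₂, ascPochhammer_eval_mul_eq]

/-- The numerator of `Frat` over the denominator `∏ h ∈ range (n / N + 1), (X + N * h) ^ a`. -/
noncomputable def fratNumerator (a r N n : ℕ) : ℚ[X] :=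
  C (((n / N).factorial : ℚ) ^ (a - 2 * r * N)) *
    (ascPochhammer ℚ (r * n)).comp (X - C (r * n : ℚ)) *
    (ascPochhammer ℚ (r * n)).comp (X + C (n + 1 : ℚ))

lemma natDegree_fratNumerator_le (a r N n : ℕ) : (fratNumerator a r N n).natDegree ≤ 2 * r * n := by
  refine natDegree_mul_le.trans (Nat.add_le_add (natDegree_C_mul_le _ _) le_rfl |>.trans ?_)
  rw [natDegree_comp, natDegree_comp, ascPochhammer_natDegree, natDegree_X_sub_C,
    natDegree_X_add_C]
  exact le_of_eq (by ring)

/-- The coefficients `p j h` of the partial fraction expansion, extended by `0` to the orders `j`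
that do not occur, in accordance with the convention `P_{k,a+1} = 0`. -/
def poleCoeff (a : ℕ) (p : ℕ → ℕ → ℚ) (j h : ℕ) : ℚ :=
  if 1 ≤ j ∧ j ≤ a then p j h else 0

variable {a r N n m : ℕ} {p : ℕ → ℕ → ℚ}

lemma poleCoeff_of_mem_Icc {j : ℕ} (hj : j ∈ Icc 1 a) (h : ℕ) : poleCoeff a p j h = p j h :=
  if_pos (mem_Icc.mp hj)

lemma poleCoeff_of_lt {j h : ℕ} (hj : a < j) : poleCoeff a p j h = 0 :=
  if_neg fun hj' ↦ hj.not_ge hj'.2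

lemma IsPartialFractionCoeffs.fratNumerator_eq (hp : IsPartialFractionCoeffs a r N n p) :
    fratNumerator a r N n = partialFractionNumerator (range (n / N + 1))
      (fun h ↦ ((N * h : ℕ) : ℚ)) a (poleCoeff a p) := by
  refine eq_partialFractionNumerator fun t ht ↦ ?_
  push_cast at ht ⊢
  have hsum : Frat a r N n t = ∑ h ∈ range (n / N + 1), ∑ j ∈ Icc 1 a,
      poleCoeff a p j h / (t + N * h) ^ j :=
    (hp t ht).trans <| sum_congr rfl fun h _ ↦ sum_congr rfl fun j hj ↦ by
      rw [poleCoeff_of_mem_Icc hj]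
  rw [← hsum, Frat, fratNumerator]
  simp only [eval_mul, eval_comp, eval_C, eval_sub, eval_add, eval_X, add_assoc]

lemma dvd_dlcm {z : ℤ} (hz : z ≠ 0) (hzn : z.natAbs ≤ n) : z ∣ dlcm n :=
  Int.natAbs_dvd.mp <| Int.natCast_dvd_natCast.mpr <|
    Finset.dvd_lcm (f := id) (mem_Icc.mpr ⟨Int.natAbs_pos.mpr hz, hzn⟩)

lemma exists_aeval_fratNumerator_eq (hN : 0 < N) (hra : 2 * r * N ≤ a) (i : ℤ) :
    ∃ g ∈ integralAfterRescale (dlcm (N * m)),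
      aeval (PowerSeries.X - PowerSeries.C (i : ℚ)) (fratNumerator a r N (N * m)) =
        (m.factorial : ℚ⟦X⟧) ^ a * g := by
  have hd : ∀ i ∈ Icc 1 m, (i : ℤ) ∣ dlcm (N * m) := fun i hi ↦ by
    have hi := mem_Icc.mp hi
    exact dvd_dlcm (by omega) (hi.2.trans (Nat.le_mul_of_pos_left m hN))
  obtain ⟨g₁, hg₁, h₁⟩ := exists_aeval_ascPochhammer_eq hd (r * N) (-i - r * (N * m : ℕ))
  obtain ⟨g₂, hg₂, h₂⟩ := exists_aeval_ascPochhammer_eq hd (r * N) (-i + (N * m : ℕ) + 1)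
  refine ⟨g₁ * g₂, mul_mem hg₁ hg₂, ?_⟩
  have hshift₁ : aeval (PowerSeries.X - PowerSeries.C (i : ℚ)) (X - C (r * (N * m : ℕ) : ℚ)) =
      PowerSeries.X + ((-i - r * (N * m : ℕ) : ℤ) : ℚ⟦X⟧) := by
    simp only [map_intCast, Nat.cast_mul, map_mul, map_natCast, aeval_sub, aeval_X, Int.cast_sub,
      Int.cast_neg, Int.cast_mul, Int.cast_natCast]
    ring
  have hshift₂ : aeval (PowerSeries.X - PowerSeries.C (i : ℚ)) (X + C ((N * m : ℕ) + 1 : ℚ)) =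
      PowerSeries.X + ((-i + (N * m : ℕ) + 1 : ℤ) : ℚ⟦X⟧) := by
    simp only [map_intCast, Nat.cast_mul, map_add, map_mul, map_natCast, map_one, aeval_X,
      Int.cast_add, Int.cast_neg, Int.cast_mul, Int.cast_natCast, Int.cast_one]
    ring
  have hpow : (m.factorial : ℚ⟦X⟧) ^ a = (m.factorial : ℚ⟦X⟧) ^ (a - 2 * r * N) *
      (m.factorial : ℚ⟦X⟧) ^ (r * N) * (m.factorial : ℚ⟦X⟧) ^ (r * N) := by
    rw [← pow_add, ← pow_add]
    congr 1
    lia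
  rw [fratNumerator, Nat.mul_div_cancel_left m hN, map_mul, map_mul, aeval_comp, aeval_comp,
    hshift₁, hshift₂, show r * (N * m) = m * (r * N) by ring, h₁, h₂, hpow, aeval_C, map_pow,
    map_natCast]
  ring

lemma C_mul_inv_prod_X_add_C_mul_sub_mem (hN : 0 < N) {i : ℕ} (hi : i ∈ range (m + 1)) :
    PowerSeries.C ((N : ℚ) ^ m * m.factorial) * (∏ h ∈ (range (m + 1)).erase i,
      (PowerSeries.X + PowerSeries.C (((N * h : ℕ) : ℚ) - (N * i : ℕ))))⁻¹ ∈
        integralAfterRescale (dlcm (N * m)) := by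
  have him : i ≤ m := mem_range_succ_iff.mp hi
  have hne (h) (hh : h ∈ (range (m + 1)).erase i) : (N : ℤ) * (h - i) ≠ 0 :=
    mul_ne_zero (mod_cast hN.ne') (sub_ne_zero.mpr (mod_cast ne_of_mem_erase hh))
  have hdvd (h) (hh : h ∈ (range (m + 1)).erase i) : (N : ℤ) * (h - i) ∣ dlcm (N * m) := by
    have hhm := mem_range_succ_iff.mp (mem_of_mem_erase hh)
    refine dvd_dlcm (hne h hh) ?_
    rw [Int.natAbs_mul, Int.natAbs_natCast]
    exact Nat.mul_le_mul_left N (by omega)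
  have hprod : ∏ h ∈ (range (m + 1)).erase i, ((N : ℤ) * (h - i)) ∣ (N : ℤ) ^ m * m.factorial := by
    rw [prod_mul_distrib, prod_const, card_erase_of_mem hi, card_range, Nat.add_sub_cancel,
      prod_erase_range_sub him]
    refine mul_dvd_mul_left _ (((isUnit_one.neg.pow i).mul_left_dvd).mpr ?_)
    exact mod_cast Nat.factorial_mul_factorial_dvd_factorial him
  simpa [mul_sub] using C_mul_inv_prod_X_add_C_mem hne hdvd hprod

lemma IsPartialFractionCoeffs.exists_int_mul_eq (hp : IsPartialFractionCoeffs a r N (N * m) p)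
    (hN : 0 < N) (hra : 2 * r * N ≤ a) {i : ℕ} (hi : i ∈ range (m + 1)) {j : ℕ} (hj : j ∈ Icc 1 a) :
    ∃ z : ℤ, (dlcm (N * m) : ℚ) ^ (a - j) * ((N : ℚ) ^ (a * m) * p j i) = z := by
  set S : ℚ⟦X⟧ := ∏ h ∈ (range (m + 1)).erase i,
    (PowerSeries.X + PowerSeries.C (((N * h : ℕ) : ℚ) - (N * i : ℕ))) with hS
  have hS0 : PowerSeries.constantCoeff S ≠ 0 := by
    rw [hS, map_prod, prod_ne_zero_iff]
    intro h hh
    simpa [sub_eq_zero, hN.ne'] using ne_of_mem_erase hh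
  have hcoeff := coeff_aeval_partialFractionNumerator_mul_pow (x := fun h ↦ ((N * h : ℕ) : ℚ))
    (c := poleCoeff a p) hi (PowerSeries.mul_inv_cancel S hS0) hj
  have hnum := hp.fratNumerator_eq
  rw [Nat.mul_div_cancel_left m hN] at hnum
  obtain ⟨g, hg, hfg⟩ := exists_aeval_fratNumerator_eq (m := m) hN hra (N * i : ℕ)
  rw [Int.cast_natCast] at hfg
  rw [← hnum, hfg, poleCoeff_of_mem_Icc hj] at hcoeff
  have hmem := mul_mem hg (pow_mem (C_mul_inv_prod_X_add_C_mul_sub_mem hN hi) a)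
  have hscale : PowerSeries.C ((N : ℚ) ^ (a * m)) * ((m.factorial : ℚ⟦X⟧) ^ a * g * S⁻¹ ^ a) =
      g * (PowerSeries.C ((N : ℚ) ^ m * m.factorial) * S⁻¹) ^ a := by
    rw [map_mul, map_natCast, map_pow, map_pow]
    ring
  rw [← hcoeff, ← PowerSeries.coeff_C_mul, hscale]
  simpa only [Int.cast_natCast] using exists_int_of_mem_integralAfterRescale hmem (a - j)

/-- The subgroup `δ⁻¹ℤ` of `ℚ`. -/
def inverseIntegers (δ : ℚ) : AddSubgroup ℚ :=
  (Int.castAddHom ℚ).range.comap (AddMonoidHom.mulLeft δ)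

lemma mem_inverseIntegers {δ q : ℚ} : q ∈ inverseIntegers δ ↔ ∃ z : ℤ, δ * q = z :=
  exists_congr fun _ ↦ eq_comm

lemma IsPartialFractionCoeffs.div_pow_mem (hp : IsPartialFractionCoeffs a r N (N * m) p)
    (hN : 0 < N) (hra : 2 * r * N ≤ a) {i : ℕ} (hi : i ∈ range (m + 1)) {j : ℕ} (hj : j ∈ Icc 1 a)
    {s : ℕ} (hs : s ∈ Icc 1 (N * m)) :
    p j i / (s : ℚ) ^ j ∈ inverseIntegers (deltan a N (N * m)) := by
  obtain ⟨z, hz⟩ := hp.exists_int_mul_eq hN hra hi hj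
  obtain ⟨e, he⟩ : s ∣ dlcm (N * m) := Finset.dvd_lcm (f := id) hs
  have hs0 : (s : ℚ) ≠ 0 := Nat.cast_ne_zero.mpr (Nat.one_le_iff_ne_zero.mp (mem_Icc.mp hs).1)
  have hsplit : (dlcm (N * m) : ℚ) ^ a =
      (dlcm (N * m) : ℚ) ^ (a - j) * ((s : ℚ) ^ j * (e : ℚ) ^ j) := by
    rw [← mul_pow, ← Nat.cast_mul, ← he, pow_sub_mul_pow _ (mem_Icc.mp hj).2]
  refine mem_inverseIntegers.mpr ⟨N ^ a * e ^ j * z, ?_⟩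
  rw [deltan, Nat.mul_div_cancel_left m hN]
  push_cast
  rw [mul_pow, hsplit, ← hz]
  field_simp

lemma poleCoeff_mem (hN : 0 < N) (hn : 0 < N * m) {M : AddSubgroup ℚ}
    (hM : ∀ h ∈ range (m + 1), ∀ j ∈ Icc 1 a, ∀ s ∈ Icc 1 (N * m), p j h / (s : ℚ) ^ j ∈ M) :
    ∀ h ∈ range (N * m / N + 1), ∀ j, poleCoeff a p j h ∈ M := by
  rw [Nat.mul_div_cancel_left m hN]
  intro h hh j
  unfold poleCoeff
  split_ifs with hj
  · simpa using hM h hh j (mem_Icc.mpr hj) 1 (mem_Icc.mpr ⟨le_rfl, hn⟩)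
  · exact zero_mem M

end Frat

section PolynomialLattice

variable {R : Type*} [CommRing R]

/-- The polynomials of degree at most `n` with coefficients in the additive subgroup `M`. -/
def polynomialLattice (M : AddSubgroup R) (n : ℕ) : AddSubgroup R[X] where
  carrier := {W | W.natDegree ≤ n ∧ ∀ i, W.coeff i ∈ M}
  add_mem' hA hB := ⟨(natDegree_add_le _ _).trans (max_le hA.1 hB.1), fun i ↦ by
    rw [coeff_add]
    exact add_mem (hA.2 i) (hB.2 i)⟩
  zero_mem' := ⟨by simp, fun _ ↦ by simp⟩
  neg_mem' hA := ⟨(natDegree_neg _).trans_le hA.1, fun i ↦ by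
    rw [coeff_neg]
    exact neg_mem (hA.2 i)⟩

variable {M : AddSubgroup R} {n : ℕ} {W : R[X]}

lemma C_mul_X_pow_mem_polynomialLattice {c : R} (hc : c ∈ M) {i : ℕ} (hi : i ≤ n) :
    C c * X ^ i ∈ polynomialLattice M n := by
  refine ⟨(natDegree_C_mul_X_pow_le _ _).trans hi, fun l ↦ ?_⟩
  rw [coeff_C_mul_X_pow]
  split_ifs
  exacts [hc, zero_mem M]

lemma X_mul_derivative_sub_natCast_mul_mem (hW : W ∈ polynomialLattice M n) (k : ℕ) :
    X * derivative W - (k : R[X]) * W ∈ polynomialLattice M n := by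
  refine sub_mem ⟨?_, fun i ↦ ?_⟩ (nsmul_eq_mul k W ▸ nsmul_mem hW k)
  · rcases Nat.eq_zero_or_pos W.natDegree with h0 | hpos
    · simp [derivative_of_natDegree_zero h0]
    · have := natDegree_derivative_lt hpos.ne'
      have := hW.1
      exact natDegree_mul_le.trans (by have := natDegree_X_le (R := R); omega)
  · cases i with
    | zero => simp
    | succ i =>
      rw [coeff_X_mul, coeff_derivative, mul_comm, ← Nat.cast_succ, ← nsmul_eq_mul]
      exact nsmul_mem (hW.2 _) _

lemma exists_eq_one_sub_X_mul (hW : W ∈ polynomialLattice M n) (h1 : W.eval 1 = 0) :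
    ∃ T, W = (1 - X) * T ∧ T ∈ polynomialLattice M n ∧ X * T ∈ polynomialLattice M n := by
  obtain ⟨T', hT'⟩ := dvd_iff_isRoot.mpr h1
  obtain ⟨T, rfl⟩ : ∃ T, W = (1 - X) * T := ⟨-T', by rw [hT', C_1]; ring⟩
  have hcoeff (i : ℕ) : T.coeff i ∈ M := by
    induction i with
    | zero => simpa using hW.2 0
    | succ i ih => simpa [sub_mul] using add_mem (hW.2 (i + 1)) ih
  have hXT : (X * T).natDegree ≤ n := by
    nontriviality R
    rcases eq_or_ne T 0 with rfl | hT
    · simp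
    · have hdeg := (monic_X_sub_C (1 : R)).natDegree_mul' hT
      rw [natDegree_X_sub_C] at hdeg
      rw [natDegree_X_mul hT, add_comm, ← hdeg, ← natDegree_neg, C_1, ← neg_mul, neg_sub]
      exact hW.1
  refine ⟨T, rfl, ⟨?_, hcoeff⟩, hXT, fun i ↦ ?_⟩
  · rcases eq_or_ne T 0 with rfl | hT
    · simp
    · have := Polynomial.nontrivial_iff.mp ⟨T, 0, hT⟩
      exact (Nat.le_succ _).trans ((natDegree_X_mul hT).ge.trans hXT)
  · cases i with
    | zero => simp
    | succ i => rw [coeff_X_mul]; exact hcoeff i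

lemma exists_eq_sum_X_pow_mul_expand {N : ℕ} (hN : 0 < N) (hW : W ∈ polynomialLattice M n) :
    ∃ Q : ℕ → R[X], W = ∑ l ∈ range N, X ^ l * expand R N (Q l) ∧
      ∀ l, expand R N (Q l) ∈ polynomialLattice M n := by
  refine ⟨fun l ↦ ∑ i ∈ range (n + 1) with i % N = l, C (W.coeff i) * X ^ (i / N), ?_, fun l ↦ ?_⟩
  · conv_lhs => rw [as_sum_range_C_mul_X_pow' W (Nat.lt_succ_of_le hW.1)]
    rw [← sum_fiberwise_of_maps_to fun i _ ↦ mem_range.mpr (Nat.mod_lt i hN)]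
    refine sum_congr rfl fun l _ ↦ ?_
    rw [map_sum, mul_sum]
    refine sum_congr rfl fun i hi ↦ ?_
    rw [map_mul, expand_C, map_pow, expand_X, ← pow_mul, mul_left_comm, ← pow_add,
      ← (mem_filter.mp hi).2, Nat.mod_add_div]
  · rw [map_sum]
    refine sum_mem fun i hi ↦ ?_
    rw [map_mul, expand_C, map_pow, expand_X, ← pow_mul]
    refine C_mul_X_pow_mem_polynomialLattice (hW.2 i) ((Nat.mul_div_le i N).trans ?_)
    exact mem_range_succ_iff.mp (mem_filter.mp hi).1

end PolynomialLattice

section RationalFunctions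

lemma ratDeriv_algebraMap_div (P : ℚ[X]) {Q : ℚ[X]} (hQ : Q ≠ 0) :
    ratDeriv (algebraMap ℚ[X] (RatFunc ℚ) P / algebraMap ℚ[X] (RatFunc ℚ) Q) =
      algebraMap ℚ[X] (RatFunc ℚ) (derivative P * Q - P * derivative Q) /
        algebraMap ℚ[X] (RatFunc ℚ) (Q ^ 2) := by
  set f := algebraMap ℚ[X] (RatFunc ℚ) P / algebraMap ℚ[X] (RatFunc ℚ) Q with hf
  have hcross : f.num * Q = P * f.denom := by
    refine RatFunc.algebraMap_injective ℚ ?_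
    rw [map_mul, map_mul, ← div_eq_div_iff (RatFunc.algebraMap_ne_zero f.denom_ne_zero)
      (RatFunc.algebraMap_ne_zero hQ), RatFunc.num_div_denom, hf]
  have hcross' := congrArg derivative hcross
  rw [derivative_mul, derivative_mul] at hcross'
  rw [ratDeriv, RatFunc.mk_eq_div,
    div_eq_div_iff (RatFunc.algebraMap_ne_zero (pow_ne_zero _ f.denom_ne_zero))
      (RatFunc.algebraMap_ne_zero (pow_ne_zero _ hQ)), ← map_mul, ← map_mul]
  refine congrArg _ ?_
  linear_combination (f.denom * Q) * hcross' -
    (derivative f.denom * Q + f.denom * derivative Q) * hcross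

lemma X_mul_derivative_X_pow {R : Type*} [CommSemiring R] (k : ℕ) :
    X * derivative (X ^ k : R[X]) = (k : R[X]) * X ^ k := by
  cases k with
  | zero => simp
  | succ k => rw [derivative_X_pow, Nat.add_sub_cancel, C_eq_natCast]; ring

lemma X_pow_succ_mul_ratDeriv {k : ℕ} {f : RatFunc ℚ} {Q : ℚ[X]}
    (hf : RatFunc.X ^ k * f = algebraMap ℚ[X] (RatFunc ℚ) Q) :
    RatFunc.X ^ (k + 1) * ratDeriv f =
      algebraMap ℚ[X] (RatFunc ℚ) (X * derivative Q - (k : ℚ[X]) * Q) := by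
  have hfdiv : f = algebraMap ℚ[X] (RatFunc ℚ) Q / algebraMap ℚ[X] (RatFunc ℚ) (X ^ k) := by
    rw [map_pow, RatFunc.algebraMap_X, eq_div_iff (pow_ne_zero _ RatFunc.X_ne_zero), ← hf, mul_comm]
  rw [hfdiv, ratDeriv_algebraMap_div _ (pow_ne_zero _ X_ne_zero), mul_div_assoc',
    div_eq_iff (RatFunc.algebraMap_ne_zero (pow_ne_zero _ (pow_ne_zero _ X_ne_zero))),
    ← RatFunc.algebraMap_X, ← map_pow, ← map_mul, ← map_mul]
  refine congrArg _ ?_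
  linear_combination (-(X ^ k * Q)) * X_mul_derivative_X_pow (R := ℚ) k

variable {a r N n m : ℕ} {p : ℕ → ℕ → ℚ} {M : AddSubgroup ℚ}

lemma Ppoly_eq_sum_poleCoeff (j : ℕ) :
    Ppoly a N n p j = ∑ h ∈ range (n / N + 1), C (poleCoeff a p j h) * X ^ (N * h) := by
  unfold Ppoly poleCoeff
  split_ifs <;> simp

/-- The polynomial `Q` with `z ^ k * P_{k+1,j}(z) = Q(z ^ N)`. -/
noncomputable def PPkPoly (a N n : ℕ) (p : ℕ → ℕ → ℚ) (k j : ℕ) : ℚ[X] :=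
  ∑ h ∈ range (n / N + 1), C (derivedCoeff (fun h ↦ N * h) (poleCoeff a p) k j h) * X ^ h

lemma expand_PPkPoly (k j : ℕ) : expand ℚ N (PPkPoly a N n p k j) =
    ∑ h ∈ range (n / N + 1),
      C (derivedCoeff (fun h ↦ N * h) (poleCoeff a p) k j h) * X ^ (N * h) := by
  simp only [PPkPoly, map_sum, map_mul, expand_C, map_pow, expand_X, pow_mul]

lemma expand_PPkPoly_succ (k j : ℕ) : expand ℚ N (PPkPoly a N n p (k + 1) j) =
    X * derivative (expand ℚ N (PPkPoly a N n p k j)) -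
      (k : ℚ[X]) * expand ℚ N (PPkPoly a N n p k j) - expand ℚ N (PPkPoly a N n p k (j + 1)) := by
  simp only [expand_PPkPoly, derivative_sum, mul_sum, ← sum_sub_distrib]
  refine sum_congr rfl fun h _ ↦ ?_
  rw [derivedCoeff, C_sub, C_mul, C_sub, derivative_C_mul, C_eq_natCast, C_eq_natCast]
  linear_combination -(C (derivedCoeff (fun h ↦ N * h) (poleCoeff a p) k j h)) *
    X_mul_derivative_X_pow (R := ℚ) (N * h)

lemma X_pow_mul_PPk (k j : ℕ) : RatFunc.X ^ k * PPk a N n p k j =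
    algebraMap ℚ[X] (RatFunc ℚ) (expand ℚ N (PPkPoly a N n p k j)) := by
  induction k generalizing j with
  | zero =>
    rw [PPk, pow_zero, one_mul, Ppoly_eq_sum_poleCoeff, expand_PPkPoly]
    rfl
  | succ k ih =>
    have hX := RatFunc.X_ne_zero (K := ℚ)
    have hnext : RatFunc.X ^ (k + 1) * (1 / RatFunc.X * PPk a N n p k (j + 1)) =
        RatFunc.X ^ k * PPk a N n p k (j + 1) := by
      field_simp
      ring
    rw [PPk, mul_sub, X_pow_succ_mul_ratDeriv (ih j), hnext, ih, ← map_sub, expand_PPkPoly_succ]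

lemma expand_PPkPoly_mem (hM : ∀ h ∈ range (n / N + 1), ∀ j, poleCoeff a p j h ∈ M) (k j : ℕ) :
    expand ℚ N (PPkPoly a N n p k j) ∈ polynomialLattice M n := by
  rw [expand_PPkPoly]
  refine sum_mem fun h hh ↦ C_mul_X_pow_mem_polynomialLattice (derivedCoeff_mem (hM h hh) k j) ?_
  exact (Nat.mul_le_mul_left N (mem_range_succ_iff.mp hh)).trans (Nat.mul_div_le n N)

lemma IsPartialFractionCoeffs.eval_one_PPkPoly (hp : IsPartialFractionCoeffs a r N n p) {k : ℕ}
    (hk : k + 2 * r * n + 1 < a * (n / N + 1)) :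
    (expand ℚ N (PPkPoly a N n p k 1)).eval 1 = 0 := by
  have hdeg := natDegree_fratNumerator_le a r N n
  rw [hp.fratNumerator_eq] at hdeg
  rw [expand_eval, one_pow, PPkPoly, eval_finsetSum]
  simpa using sum_derivedCoeff_one_eq_zero (s := range (n / N + 1)) (e := fun h ↦ N * h)
    (c := poleCoeff a p) (fun _ _ ↦ poleCoeff_of_lt) (k := k) (by rw [card_range]; omega)

lemma one_sub_X_ne_zero : (1 - RatFunc.X : RatFunc ℚ) ≠ 0 := by
  rw [← RatFunc.algebraMap_X, ← map_one (algebraMap ℚ[X] (RatFunc ℚ)), ← map_sub]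
  exact RatFunc.algebraMap_ne_zero (sub_ne_zero.mpr (X_ne_C 1).symm)

lemma exists_X_pow_mul_UkF_eq (hU : Upoly a N n p ∈ polynomialLattice M n) {k : ℕ}
    (hdiv : ∀ i < k, ∃ T, expand ℚ N (PPkPoly a N n p i 1) = (1 - X) * T ∧
      X * T ∈ polynomialLattice M n) :
    ∃ W ∈ polynomialLattice M n,
      RatFunc.X ^ k * UkF a N n p k = algebraMap ℚ[X] (RatFunc ℚ) W := by
  induction k with
  | zero => exact ⟨_, hU, by rw [UkF, pow_zero, one_mul]⟩
  | succ k ih =>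
    obtain ⟨W, hW, hWU⟩ := ih fun i hi ↦ hdiv i (hi.trans k.lt_succ_self)
    obtain ⟨T, hT, hXT⟩ := hdiv k k.lt_succ_self
    have hX1 := one_sub_X_ne_zero
    have hP := X_pow_mul_PPk (a := a) (N := N) (n := n) (p := p) k 1
    rw [hT, map_mul, map_sub, map_one, RatFunc.algebraMap_X] at hP
    refine ⟨_, sub_mem (X_mul_derivative_sub_natCast_mul_mem hW k) hXT, ?_⟩
    rw [UkF, mul_sub, X_pow_succ_mul_ratDeriv hWU, map_sub _ _ (X * T), map_mul,
      RatFunc.algebraMap_X]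
    field_simp
    linear_combination -RatFunc.X * hP

lemma exists_X_pow_mul_VkF_eq (hV : Vpoly a N n p ∈ polynomialLattice M n) {k : ℕ}
    (hdiv : ∀ i < k, ∃ T, expand ℚ N (PPkPoly a N n p i 1) = (1 - X) * T ∧
      T ∈ polynomialLattice M n) :
    ∃ W ∈ polynomialLattice M n,
      RatFunc.X ^ k * VkF a N n p k = algebraMap ℚ[X] (RatFunc ℚ) W := by
  induction k with
  | zero => exact ⟨_, hV, by rw [VkF, pow_zero, one_mul]⟩
  | succ k ih =>
    obtain ⟨W, hW, hWV⟩ := ih fun i hi ↦ hdiv i (hi.trans k.lt_succ_self)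
    obtain ⟨T, hT, hTM⟩ := hdiv k k.lt_succ_self
    have hX := RatFunc.X_ne_zero (K := ℚ)
    have hX1 := one_sub_X_ne_zero
    have hP := X_pow_mul_PPk (a := a) (N := N) (n := n) (p := p) k 1
    rw [hT, map_mul, map_sub, map_one, RatFunc.algebraMap_X] at hP
    refine ⟨_, add_mem (X_mul_derivative_sub_natCast_mul_mem hW k) hTM, ?_⟩
    rw [VkF, mul_add, X_pow_succ_mul_ratDeriv hWV, map_add _ _ T]
    field_simp
    linear_combination RatFunc.X * hP

lemma Upoly_mem_polynomialLattice (hN : 0 < N)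
    (hM : ∀ h ∈ range (m + 1), ∀ j ∈ Icc 1 a, ∀ s ∈ Icc 1 (N * m), p j h / (s : ℚ) ^ j ∈ M) :
    Upoly a N (N * m) p ∈ polynomialLattice M (N * m) := by
  refine neg_mem (sum_mem fun t ht ↦ ?_)
  have ht := mem_Icc.mp ht
  refine C_mul_X_pow_mem_polynomialLattice (sum_mem fun j hj ↦ sum_mem fun h hh ↦ ?_) ht.2
  have hht : N * h ≤ t - 1 :=
    (Nat.mul_le_mul_left N (mem_range_succ_iff.mp hh)).trans (Nat.mul_div_le _ _)
  have hhm : h ≤ m := Nat.le_of_mul_le_mul_left (show N * h ≤ N * m by omega) hN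
  have h := hM h (mem_range_succ_iff.mpr hhm) j hj (t - N * h) (mem_Icc.mpr (by omega))
  rwa [Nat.cast_sub (by omega), Nat.cast_mul] at h

lemma Vpoly_mem_polynomialLattice (hN : 0 < N)
    (hM : ∀ h ∈ range (m + 1), ∀ j ∈ Icc 1 a, ∀ s ∈ Icc 1 (N * m), p j h / (s : ℚ) ^ j ∈ M) :
    Vpoly a N (N * m) p ∈ polynomialLattice M (N * m) := by
  refine neg_mem (sum_mem fun t ht ↦ ?_)
  have ht := mem_range.mp ht
  refine C_mul_X_pow_mem_polynomialLattice (sum_mem fun j hj ↦ sum_mem fun h hh ↦ ?_) ht.le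
  rw [Nat.mul_div_cancel_left m hN, Nat.add_div_right t hN, mem_Icc] at hh
  have hht : t < N * h := (Nat.lt_mul_div_succ t hN).trans_le (Nat.mul_le_mul_left N hh.1)
  have hhm : N * h ≤ N * m := Nat.mul_le_mul_left N hh.2
  have h := hM h (mem_range_succ_iff.mpr hh.2) j hj (N * h - t) (mem_Icc.mpr (by omega))
  rwa [Nat.cast_sub hht.le, Nat.cast_mul] at h

/-- The shape asserted in the theorem: `Q` is a polynomial in `z ^ N`, of degree at most `n` in `z`
and with coefficients in `δ⁻¹ℤ`. -/
abbrev IsIntegralShape (N n : ℕ) (δ : ℚ) (Q : ℚ[X]) : Prop :=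
  Q.natDegree ≤ n ∧ (∀ i, Q.coeff i ≠ 0 → N ∣ i) ∧ ∀ i, ∃ z : ℤ, δ * Q.coeff i = z

lemma isIntegralShape_expand (hN : 0 < N) {δ : ℚ} {Q : ℚ[X]}
    (hQ : expand ℚ N Q ∈ polynomialLattice (inverseIntegers δ) n) :
    IsIntegralShape N n δ (expand ℚ N Q) :=
  ⟨hQ.1, fun _ hi ↦ of_not_not fun h ↦ hi (by rw [coeff_expand hN, if_neg h]),
    fun i ↦ mem_inverseIntegers.mp (hQ.2 i)⟩

lemma exists_algebraMap_eq_sum_X_pow_mul (hN : 0 < N) {δ : ℚ} {W : ℚ[X]}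
    (hW : W ∈ polynomialLattice (inverseIntegers δ) n) :
    ∃ Q : ℕ → ℚ[X], algebraMap ℚ[X] (RatFunc ℚ) W =
      ∑ l ∈ range N, RatFunc.X ^ l * algebraMap ℚ[X] (RatFunc ℚ) (Q l) ∧
        ∀ l ∈ range N, IsIntegralShape N n δ (Q l) := by
  obtain ⟨Q, rfl, hQ⟩ := exists_eq_sum_X_pow_mul_expand hN hW
  refine ⟨fun l ↦ expand ℚ N (Q l), ?_, fun l _ ↦ isIntegralShape_expand hN (hQ l)⟩
  simp only [map_sum, map_mul, map_pow, RatFunc.algebraMap_X]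

end RationalFunctions

/-- Let `a, r, N, n` be positive integers with `2rN < a` and `N ∣ n`, and set
`d₀ = a(n/N + 1) - 2rn`. Then for every `1 ≤ k ≤ d₀ - 1` and `1 ≤ j ≤ a`:
(i) `z^{k-1} P_{k,j}(z)` is a polynomial in `z^N` of degree at most `n`, with all
coefficients in `δ_n⁻¹ ℤ`; (ii) in the decompositions
`z^{k-1} U_k(z) = ∑_{λ=0}^{N-1} z^λ U_{k,λ}(z)` and
`z^{k-1} V_k(z) = ∑_{λ=0}^{N-1} z^λ V_{k,λ}(z)` with `U_{k,λ}, V_{k,λ} ∈ ℚ[z^N, z^{-N}]`,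
the `U_{k,λ}` and `V_{k,λ}` are polynomials in `z^N` of degree at most `n` with all
coefficients in `δ_n⁻¹ ℤ`. -/
theorem coefficients_shape_and_integrality
    (a r N n : ℕ) (ha : 0 < a) (hr : 0 < r) (hN : 0 < N) (hn : 0 < n)
    (hra : 2 * r * N < a) (hNn : N ∣ n)
    (p : ℕ → ℕ → ℚ) (hp : IsPartialFractionCoeffs a r N n p) :
    ∀ k : ℕ, 1 ≤ k → k + 1 ≤ a * (n / N + 1) - 2 * r * n →
      (∀ j ∈ Finset.Icc 1 a, ∃ Q : Polynomial ℚ,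
        RatFunc.X ^ (k - 1) * PPk a N n p (k - 1) j
          = algebraMap (Polynomial ℚ) (RatFunc ℚ) Q ∧
        Q.natDegree ≤ n ∧ (∀ m : ℕ, Q.coeff m ≠ 0 → N ∣ m) ∧
        (∀ m : ℕ, ∃ z : ℤ, ((deltan a N n : ℕ) : ℚ) * Q.coeff m = (z : ℚ))) ∧
      (∃ Uc : ℕ → Polynomial ℚ,
        RatFunc.X ^ (k - 1) * UkF a N n p (k - 1)
          = ∑ l ∈ Finset.range N,
              RatFunc.X ^ l * algebraMap (Polynomial ℚ) (RatFunc ℚ) (Uc l) ∧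
        ∀ l ∈ Finset.range N,
          (Uc l).natDegree ≤ n ∧ (∀ m : ℕ, (Uc l).coeff m ≠ 0 → N ∣ m) ∧
          (∀ m : ℕ, ∃ z : ℤ, ((deltan a N n : ℕ) : ℚ) * (Uc l).coeff m = (z : ℚ))) ∧
      (∃ Vc : ℕ → Polynomial ℚ,
        RatFunc.X ^ (k - 1) * VkF a N n p (k - 1)
          = ∑ l ∈ Finset.range N,
              RatFunc.X ^ l * algebraMap (Polynomial ℚ) (RatFunc ℚ) (Vc l) ∧
        ∀ l ∈ Finset.range N,
          (Vc l).natDegree ≤ n ∧ (∀ m : ℕ, (Vc l).coeff m ≠ 0 → N ∣ m) ∧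
          (∀ m : ℕ, ∃ z : ℤ, ((deltan a N n : ℕ) : ℚ) * (Vc l).coeff m = (z : ℚ))) := by
  intro k hk hkd
  obtain ⟨m, rfl⟩ := hNn
  obtain ⟨k, rfl⟩ := Nat.exists_eq_add_of_le' hk
  rw [Nat.add_sub_cancel]
  have hcoeff : ∀ h ∈ range (m + 1), ∀ j ∈ Icc 1 a, ∀ s ∈ Icc 1 (N * m),
      p j h / (s : ℚ) ^ j ∈ inverseIntegers (deltan a N (N * m)) :=
    fun h hh j hj s hs ↦ hp.div_pow_mem hN hra.le hh hj hs
  have hP (i j : ℕ) := expand_PPkPoly_mem (poleCoeff_mem hN hn hcoeff) i j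
  have hdiv (i : ℕ) (hi : i < k) :=
    exists_eq_one_sub_X_mul (hP i 1) (hp.eval_one_PPkPoly (k := i) (by omega))
  obtain ⟨W, hW, hWU⟩ := exists_X_pow_mul_UkF_eq (Upoly_mem_polynomialLattice hN hcoeff)
    fun i hi ↦ (hdiv i hi).imp fun _ hT ↦ ⟨hT.1, hT.2.2⟩
  obtain ⟨W', hW', hWV⟩ := exists_X_pow_mul_VkF_eq (Vpoly_mem_polynomialLattice hN hcoeff)
    fun i hi ↦ (hdiv i hi).imp fun _ hT ↦ ⟨hT.1, hT.2.1⟩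
  rw [hWU, hWV]
  exact ⟨fun j _ ↦ ⟨_, X_pow_mul_PPk k j, isIntegralShape_expand hN (hP k j)⟩,
    exists_algebraMap_eq_sum_X_pow_mul hN hW, exists_algebraMap_eq_sum_X_pow_mul hN hW'⟩
end

section
/- Let a, r, N, n be positive integers with 2rN < a and N | n, let z₀ ∈ {1, e^{iπ/N}} and p ∈ {0,1}, set d₀ = a(n/N + 1) − 2rn, and define s_{k,i} for 1 ≤ k ≤ d₀ − 1 and 1 ≤ i ≤ a+N by s_{k,i} = δ_n z₀^{k−1} P_{k,i}(z₀) for 1 ≤ i ≤ a and s_{k,a+1+λ} = δ_n (U_{k,λ}(z₀) + (−1)^p V_{k,N−λ}(z₀)) for 0 ≤ λ ≤ N−1 (with V_{k,N} = V_{k,0}). Then every s_{k,i} is a rational integer. -/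
/-- `f ∈ ℚ[z^N, z^{-N}]`. -/
def InLaurentN (N : ℕ) (f : RatFunc ℚ) : Prop :=
  ∃ (s : Finset ℤ) (c : ℤ → ℚ), f = ∑ m ∈ s, RatFunc.C (c m) * RatFunc.X ^ ((N : ℤ) * m)

/-!
Put `D = d_n` and `m = n / N`. The two Pochhammer symbols in `F` split into `rN` blocks of
length `m` each, so `D ^ a * N ^ (a * (m + 1)) * F`, which is `δ_n F`, is a product of `a` functions
`D * N * N ^ m * Q(t) / (t (t + N) ⋯ (t + m N))` in which `Q` takes values divisible by `m!` at the
poles. The residues of such a function are integral multiples of `D * N`, because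
`m! / (h! (m - h)!)` is an integer. Two functions `x_h = D * N / (t + N * h)` satisfy
`x_h * x_i = c * (x_h - x_i)` with `c = D / (i - h)` an integer, so every product of `a` of them is
an integral combination of the powers `x_h ^ j`, `1 ≤ j ≤ a`. By uniqueness of partial fractions,
`δ_n p_{j,h}` is an integral multiple of `(D * N) ^ j`, hence `δ_n P_j`, `δ_n U` and `δ_n V` have
integral coefficients.

The recursion for `P_{k,j}` reads `z ^ k P_{k+1,j} = (z d/dz - (k - 1)) (z ^ (k-1) P_{k,j}) -
z ^ (k-1) P_{k,j+1}`, so integrality persists inside `ℤ[z ^ N, z ^ (-N)]`, while those for `U_k` and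
`V_k` stay inside `ℤ[z, 1/z, 1/(1-z)]`, whose elements have integral Laurent expansions at `0`.
Comparing these expansions with the components shows `δ_n U_{k,λ}`, `δ_n V_{k,λ}` lie in
`ℤ[z ^ N, z ^ (-N)]`, and `z₀ ^ N = ± 1`.
-/

section RationalDerivation

open Polynomial

local notation "ι" => algebraMap ℚ[X] (RatFunc ℚ)

theorem ratDeriv_div (p : ℚ[X]) {q : ℚ[X]} (hq : q ≠ 0) :
    ratDeriv (ι p / ι q) = ι (derivative p * q - p * derivative q) / ι (q ^ 2) := by
  set f := ι p / ι q with hf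
  have cross : f.num * q = p * f.denom := by
    apply RatFunc.algebraMap_injective ℚ
    rw [map_mul, map_mul, ← div_eq_div_iff (RatFunc.algebraMap_ne_zero f.denom_ne_zero)
      (RatFunc.algebraMap_ne_zero hq), RatFunc.num_div_denom, hf]
  have cross' := congrArg derivative cross
  rw [derivative_mul, derivative_mul] at cross'
  have key : (derivative f.num * f.denom - f.num * derivative f.denom) * q ^ 2 =
      (derivative p * q - p * derivative q) * f.denom ^ 2 := by
    linear_combination (f.denom * q) * cross' -
      (f.denom * derivative q + q * derivative f.denom) * cross
  have hne : ∀ {w : ℚ[X]}, w ≠ 0 → ι (w ^ 2) ≠ 0 := fun hw =>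
    RatFunc.algebraMap_ne_zero (pow_ne_zero 2 hw)
  rw [ratDeriv, RatFunc.mk_eq_div, div_eq_div_iff (hne f.denom_ne_zero) (hne hq), ← map_mul, key,
    map_mul]

theorem ratDeriv_add (f g : RatFunc ℚ) : ratDeriv (f + g) = ratDeriv f + ratDeriv g := by
  induction f using RatFunc.induction_on with | _ p q hq
  induction g using RatFunc.induction_on with | _ u v hv
  have hne : ∀ {w : ℚ[X]}, w ≠ 0 → ι w ≠ 0 := RatFunc.algebraMap_ne_zero
  rw [div_add_div _ _ (hne hq) (hne hv), ← map_mul, ← map_mul, ← map_mul, ← map_add,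
    ratDeriv_div _ (mul_ne_zero hq hv), ratDeriv_div _ hq, ratDeriv_div _ hv,
    div_add_div _ _ (hne (pow_ne_zero 2 hq)) (hne (pow_ne_zero 2 hv)), ← map_mul, ← map_mul,
    ← map_mul, ← map_add, mul_pow]
  congr 2
  simp only [derivative_add, derivative_mul]
  ring

theorem ratDeriv_mul (f g : RatFunc ℚ) :
    ratDeriv (f * g) = f * ratDeriv g + g * ratDeriv f := by
  induction f using RatFunc.induction_on with | _ p q hq
  induction g using RatFunc.induction_on with | _ u v hv
  have hq' := RatFunc.algebraMap_ne_zero (K := ℚ) hq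
  have hv' := RatFunc.algebraMap_ne_zero (K := ℚ) hv
  rw [div_mul_div_comm, ← map_mul, ← map_mul, ratDeriv_div _ (mul_ne_zero hq hv),
    ratDeriv_div _ hq, ratDeriv_div _ hv]
  simp only [derivative_mul, map_add, map_sub, map_mul, map_pow]
  field_simp
  ring

/-- `ratDeriv` bundled as a derivation of `ℚ(z)`, which makes the Leibniz calculus of
`Derivation` available for it. -/
noncomputable def ratDerivation : Derivation ℚ (RatFunc ℚ) (RatFunc ℚ) :=
  Derivation.mk' (AddMonoidHom.mk' ratDeriv ratDeriv_add).toRatLinearMap ratDeriv_mul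

theorem ratDerivation_apply (f : RatFunc ℚ) : ratDerivation f = ratDeriv f := rfl

theorem ratDerivation_X : ratDerivation RatFunc.X = 1 := by
  have h := ratDeriv_div X one_ne_zero
  simpa [ratDerivation_apply] using h

/-- The Euler operator `z d/dz` on `ℚ(z)`. -/
noncomputable def eulerDerivation : Derivation ℚ (RatFunc ℚ) (RatFunc ℚ) :=
  (RatFunc.X : RatFunc ℚ) • ratDerivation

theorem eulerDerivation_apply (f : RatFunc ℚ) :
    eulerDerivation f = RatFunc.X * ratDeriv f := rfl

theorem eulerDerivation_X_zpow (e : ℤ) :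
    eulerDerivation (RatFunc.X ^ e) = e • (RatFunc.X : RatFunc ℚ) ^ e := by
  rw [Derivation.leibniz_zpow, eulerDerivation_apply, ← ratDerivation_apply, ratDerivation_X,
    mul_one, smul_eq_mul, zpow_sub_one₀ RatFunc.X_ne_zero,
    inv_mul_cancel_right₀ RatFunc.X_ne_zero]

theorem derivation_mem_closure {R A : Type*} [CommSemiring R] [CommRing A] [Algebra R A]
    (d : Derivation R A A) {s : Set A} (hs : ∀ x ∈ s, d x ∈ Subring.closure s) {x : A}
    (hx : x ∈ Subring.closure s) : d x ∈ Subring.closure s := by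
  induction hx using Subring.closure_induction with
  | mem x hx => exact hs x hx
  | zero => simp only [map_zero, zero_mem]
  | one => simp only [Derivation.map_one_eq_zero, zero_mem]
  | add x y _ _ hdx hdy => rw [map_add]; exact add_mem hdx hdy
  | neg x _ hdx => rw [map_neg]; exact neg_mem hdx
  | mul x y hx hy hdx hdy =>
    rw [Derivation.leibniz]
    exact add_mem (mul_mem hx hdy) (mul_mem hy hdx)

end RationalDerivation

section IntegralRationalFunctions

/-- The ring `ℤ[z^N, z^{-N}]` inside `ℚ(z)`. -/
noncomputable def integralLaurent (N : ℕ) : Subring (RatFunc ℚ) :=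
  Subring.closure {RatFunc.X ^ (N : ℤ), RatFunc.X ^ (-(N : ℤ))}

/-- The ring `ℤ[z, 1/z, 1/(1-z)]` inside `ℚ(z)`, which contains the integral multiples of all the
`P_{k,j}`, `U_k` and `V_k`. -/
noncomputable def integralAwayZeroOne : Subring (RatFunc ℚ) :=
  Subring.closure {RatFunc.X, RatFunc.X⁻¹, (1 - RatFunc.X)⁻¹}

theorem X_zpow_mem_integralLaurent (N : ℕ) (m : ℤ) :
    RatFunc.X ^ ((N : ℤ) * m) ∈ integralLaurent N := by
  obtain ⟨e, rfl | rfl⟩ := m.eq_nat_or_neg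
  · rw [zpow_mul, zpow_natCast]
    exact pow_mem (Subring.subset_closure (by simp)) e
  · rw [mul_neg, ← neg_mul, zpow_mul, zpow_natCast _ e]
    exact pow_mem (Subring.subset_closure (by simp)) e

theorem X_zpow_mem_integralAwayZeroOne (e : ℤ) : RatFunc.X ^ e ∈ integralAwayZeroOne := by
  obtain ⟨k, rfl | rfl⟩ := e.eq_nat_or_neg
  · rw [zpow_natCast]
    exact pow_mem (Subring.subset_closure (by simp)) k
  · rw [zpow_neg, zpow_natCast, ← inv_pow]
    exact pow_mem (Subring.subset_closure (by simp)) k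

theorem inv_one_sub_X_mem_integralAwayZeroOne :
    (1 - RatFunc.X)⁻¹ ∈ integralAwayZeroOne :=
  Subring.subset_closure (by simp)

theorem integralLaurent_le_integralAwayZeroOne (N : ℕ) :
    integralLaurent N ≤ integralAwayZeroOne := by
  refine (Subring.closure_le).2 ?_
  rintro _ (rfl | rfl)
  exacts [X_zpow_mem_integralAwayZeroOne _, X_zpow_mem_integralAwayZeroOne _]

theorem eulerDerivation_mem_integralLaurent {N : ℕ} {f : RatFunc ℚ}
    (hf : f ∈ integralLaurent N) : eulerDerivation f ∈ integralLaurent N := by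
  refine derivation_mem_closure _ ?_ hf
  rintro _ (rfl | rfl) <;> rw [eulerDerivation_X_zpow] <;>
    exact zsmul_mem (Subring.subset_closure (by simp)) _

theorem ratDeriv_mem_integralAwayZeroOne {f : RatFunc ℚ} (hf : f ∈ integralAwayZeroOne) :
    ratDeriv f ∈ integralAwayZeroOne := by
  refine derivation_mem_closure ratDerivation ?_ hf
  change ∀ g ∈ _, ratDerivation g ∈ integralAwayZeroOne
  rintro _ (rfl | rfl | rfl)
  · rw [ratDerivation_X]
    exact one_mem _
  · rw [Derivation.leibniz_inv, ratDerivation_X, smul_eq_mul, mul_one]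
    exact neg_mem (pow_mem (Subring.subset_closure (by simp)) 2)
  · rw [Derivation.leibniz_inv, map_sub, Derivation.map_one_eq_zero, ratDerivation_X, zero_sub,
      smul_eq_mul, mul_neg_one, neg_neg]
    exact pow_mem inv_one_sub_X_mem_integralAwayZeroOne 2

theorem nsmul_C_mul_mem {A : Subring (RatFunc ℚ)} {δ : ℕ} {c : ℚ}
    (hc : δ * c ∈ (⊥ : Subring ℚ)) {f : RatFunc ℚ} (hf : f ∈ A) :
    δ • (RatFunc.C c * f) ∈ A := by
  obtain ⟨b, hb⟩ := Subring.mem_bot.1 hc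
  have hδc : δ • (RatFunc.C c * f) = (b : RatFunc ℚ) * f := by
    rw [nsmul_eq_mul, ← mul_assoc, ← map_natCast RatFunc.C, ← map_mul, ← hb, map_intCast]
  rw [hδc]
  exact mul_mem (intCast_mem A b) hf

end IntegralRationalFunctions

section Recursions

variable {a N n : ℕ} {p : ℕ → ℕ → ℚ} {δ : ℕ}

theorem X_pow_succ_mul_PPk_succ (k j : ℕ) :
    (RatFunc.X : RatFunc ℚ) ^ (k + 1) * PPk a N n p (k + 1) j =
      eulerDerivation (RatFunc.X ^ k * PPk a N n p k j) - k • (RatFunc.X ^ k * PPk a N n p k j) -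
        RatFunc.X ^ k * PPk a N n p k (j + 1) := by
  have hX := RatFunc.X_ne_zero (K := ℚ)
  have hXk : eulerDerivation (RatFunc.X ^ k) = k * (RatFunc.X : RatFunc ℚ) ^ k := by
    simpa using eulerDerivation_X_zpow k
  rw [Derivation.leibniz, hXk, eulerDerivation_apply, PPk, smul_eq_mul, smul_eq_mul, nsmul_eq_mul]
  field_simp
  ring

theorem nsmul_X_pow_mul_PPk_mem (hP : ∀ j, δ • PPk a N n p 0 j ∈ integralLaurent N) (k j : ℕ) :
    δ • (RatFunc.X ^ k * PPk a N n p k j) ∈ integralLaurent N := by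
  induction k generalizing j with
  | zero => simpa using hP j
  | succ k ih =>
    rw [X_pow_succ_mul_PPk_succ, smul_sub, smul_sub, ← map_nsmul, nsmul_left_comm]
    exact sub_mem (sub_mem (eulerDerivation_mem_integralLaurent (ih j)) (nsmul_mem (ih j) k))
      (ih (j + 1))

theorem nsmul_PPk_mem (hP : ∀ j, δ • PPk a N n p 0 j ∈ integralLaurent N) (k j : ℕ) :
    δ • PPk a N n p k j ∈ integralAwayZeroOne := by
  have hX : δ • PPk a N n p k j =
      RatFunc.X ^ (-(k : ℤ)) * δ • (RatFunc.X ^ k * PPk a N n p k j) := by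
    rw [mul_smul_comm, zpow_neg, zpow_natCast,
      inv_mul_cancel_left₀ (pow_ne_zero k RatFunc.X_ne_zero)]
  rw [hX]
  exact mul_mem (X_zpow_mem_integralAwayZeroOne _)
    (integralLaurent_le_integralAwayZeroOne N (nsmul_X_pow_mul_PPk_mem hP k j))

theorem nsmul_ratDeriv_mem {f : RatFunc ℚ} (hf : δ • f ∈ integralAwayZeroOne) :
    δ • ratDeriv f ∈ integralAwayZeroOne := by
  rw [← ratDerivation_apply, ← map_nsmul]
  exact ratDeriv_mem_integralAwayZeroOne hf

theorem nsmul_UkF_mem (hP : ∀ j, δ • PPk a N n p 0 j ∈ integralLaurent N)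
    (hU : δ • UkF a N n p 0 ∈ integralAwayZeroOne) (k : ℕ) :
    δ • UkF a N n p k ∈ integralAwayZeroOne := by
  induction k with
  | zero => exact hU
  | succ k ih =>
    rw [UkF, smul_sub, one_div, ← mul_smul_comm]
    exact sub_mem (nsmul_ratDeriv_mem ih)
      (mul_mem inv_one_sub_X_mem_integralAwayZeroOne (nsmul_PPk_mem hP k 1))

theorem nsmul_VkF_mem (hP : ∀ j, δ • PPk a N n p 0 j ∈ integralLaurent N)
    (hV : δ • VkF a N n p 0 ∈ integralAwayZeroOne) (k : ℕ) :
    δ • VkF a N n p k ∈ integralAwayZeroOne := by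
  induction k with
  | zero => exact hV
  | succ k ih =>
    have hX : RatFunc.X⁻¹ ∈ integralAwayZeroOne := Subring.subset_closure (by simp)
    rw [VkF, smul_add, one_div, mul_inv, ← mul_smul_comm]
    exact add_mem (nsmul_ratDeriv_mem ih) (mul_mem
      (mul_mem hX inv_one_sub_X_mem_integralAwayZeroOne) (nsmul_PPk_mem hP k 1))

end Recursions

section LaurentCoefficients

open scoped LaurentSeries RatFunc

variable {N : ℕ} {f : RatFunc ℚ}

/-- The ring of Laurent series all of whose coefficients lie in the subring `S`. -/
def laurentSeriesOver {R : Type*} [CommRing R] (S : Subring R) : Subring R⸨X⸩ where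
  carrier := {f | ∀ i, f.coeff i ∈ S}
  zero_mem' _ := zero_mem S
  one_mem' i := by
    rw [HahnSeries.coeff_one]
    split_ifs
    exacts [one_mem S, zero_mem S]
  add_mem' hf hg i := add_mem (hf i) (hg i)
  neg_mem' hf i := neg_mem (hf i)
  mul_mem' hf hg i := by
    rw [HahnSeries.coeff_mul]
    exact sum_mem fun _ _ => mul_mem (hf _) (hg _)

/-- The `i`-th coefficient of the Laurent expansion at `0` of a rational function. -/
noncomputable def laurentCoeff (i : ℤ) : RatFunc ℚ →+ ℚ :=
  (HahnSeries.coeff.addMonoidHom i).comp (algebraMap (RatFunc ℚ) ℚ⸨X⸩).toAddMonoidHom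

theorem algebraMap_X_zpow (e : ℤ) :
    algebraMap (RatFunc ℚ) ℚ⸨X⸩ (RatFunc.X ^ e) = HahnSeries.single e 1 := by
  rw [RatFunc.single_zpow, map_zpow₀, RatFunc.coe_X]

theorem algebraMap_inv_one_sub_X :
    algebraMap (RatFunc ℚ) ℚ⸨X⸩ (1 - RatFunc.X)⁻¹ =
      HahnSeries.ofPowerSeries ℤ ℚ (PowerSeries.mk 1) := by
  rw [map_inv₀]
  refine inv_eq_of_mul_eq_one_left ?_
  rw [map_sub, map_one, RatFunc.coe_X, ← PowerSeries.coe_X, ← PowerSeries.coe_one,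
    ← PowerSeries.coe_sub, ← PowerSeries.coe_mul, PowerSeries.mk_one_mul_one_sub_eq_one]

theorem laurentCoeff_mem_int (hf : f ∈ integralAwayZeroOne) (i : ℤ) :
    laurentCoeff i f ∈ (⊥ : Subring ℚ) := by
  suffices integralAwayZeroOne ≤
      (laurentSeriesOver ⊥).comap (algebraMap (RatFunc ℚ) ℚ⸨X⸩) from this hf i
  have single_mem (e : ℤ) : HahnSeries.single e (1 : ℚ) ∈ laurentSeriesOver ⊥ := fun i => by
    rw [HahnSeries.coeff_single]
    split_ifs
    exacts [one_mem _, zero_mem _]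
  refine Subring.closure_le.2 ?_
  rintro _ (rfl | rfl | rfl)
  · rw [← zpow_one RatFunc.X, SetLike.mem_coe, Subring.mem_comap, algebraMap_X_zpow]
    exact single_mem 1
  · rw [← zpow_neg_one RatFunc.X, SetLike.mem_coe, Subring.mem_comap, algebraMap_X_zpow]
    exact single_mem (-1)
  · rw [SetLike.mem_coe, Subring.mem_comap, algebraMap_inv_one_sub_X]
    intro i
    rw [PowerSeries.coeff_coe]
    split_ifs
    · exact zero_mem _
    · rw [PowerSeries.coeff_mk]
      exact one_mem _

theorem laurentCoeff_C_mul_X_zpow (i e : ℤ) (c : ℚ) :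
    laurentCoeff i (RatFunc.C c * RatFunc.X ^ e) = if i = e then c else 0 := by
  have hC : algebraMap (RatFunc ℚ) ℚ⸨X⸩ (RatFunc.C c) = HahnSeries.C c := by
    rw [← RatFunc.algebraMap_C, ← IsScalarTower.algebraMap_apply]
    simp
  change (algebraMap (RatFunc ℚ) ℚ⸨X⸩ (RatFunc.C c * RatFunc.X ^ e)).coeff i = _
  rw [map_mul, hC, algebraMap_X_zpow, HahnSeries.C_mul_eq_smul, HahnSeries.coeff_smul,
    HahnSeries.coeff_single]
  split_ifs <;> simp

theorem laurentCoeff_X_pow_mul (i : ℤ) (l : ℕ) :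
    laurentCoeff i (RatFunc.X ^ l * f) = laurentCoeff (i - l) f := by
  change (algebraMap (RatFunc ℚ) ℚ⸨X⸩ (RatFunc.X ^ l * f)).coeff i = _
  rw [map_mul, ← zpow_natCast, algebraMap_X_zpow, HahnSeries.coeff_single_mul, one_mul]
  rfl

theorem InLaurentN.laurentCoeff_eq_zero (hf : InLaurentN N f) {i : ℤ} (hi : ¬ (N : ℤ) ∣ i) :
    laurentCoeff i f = 0 := by
  obtain ⟨s, c, rfl⟩ := hf
  rw [map_sum]
  refine Finset.sum_eq_zero fun m _ => ?_
  rw [laurentCoeff_C_mul_X_zpow, if_neg]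
  rintro rfl
  exact hi (dvd_mul_right _ m)

theorem InLaurentN.exists_eq_sum_laurentCoeff (hN : N ≠ 0) (hf : InLaurentN N f) :
    ∃ s : Finset ℤ, f = ∑ m ∈ s,
      RatFunc.C (laurentCoeff (N * m) f) * RatFunc.X ^ ((N : ℤ) * m) := by
  obtain ⟨s, c, rfl⟩ := hf
  refine ⟨s, Finset.sum_congr rfl fun m hm => ?_⟩
  simp only [map_sum, laurentCoeff_C_mul_X_zpow, mul_right_inj' (Int.natCast_ne_zero.2 hN),
    Finset.sum_ite_eq, if_pos hm]

theorem laurentCoeff_component {W : ℕ → RatFunc ℚ}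
    (hW : ∀ l ∈ Finset.range N, InLaurentN N (W l))
    (hf : f = ∑ l ∈ Finset.range N, RatFunc.X ^ l * W l) {l : ℕ} (hl : l < N) (m : ℤ) :
    laurentCoeff (N * m) (W l) = laurentCoeff (N * m + l) f := by
  rw [hf, map_sum, Finset.sum_eq_single_of_mem l (Finset.mem_range.2 hl), laurentCoeff_X_pow_mul,
    add_sub_cancel_right]
  intro l' hl' hne
  rw [laurentCoeff_X_pow_mul]
  refine (hW l' hl').laurentCoeff_eq_zero fun hdvd => hne ?_
  rw [add_sub_assoc, dvd_add_right (dvd_mul_right _ m)] at hdvd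
  have hmod : l' ≡ l [MOD N] := (Nat.modEq_iff_dvd).2 hdvd
  exact hmod.eq_of_lt_of_lt (Finset.mem_range.1 hl') hl

theorem nsmul_component_mem {δ : ℕ} (hδf : δ • f ∈ integralAwayZeroOne) {W : ℕ → RatFunc ℚ}
    (hW : ∀ l ∈ Finset.range N, InLaurentN N (W l))
    (hf : f = ∑ l ∈ Finset.range N, RatFunc.X ^ l * W l) {l : ℕ} (hl : l < N) :
    δ • W l ∈ integralLaurent N := by
  obtain ⟨s, hs⟩ := (hW l (Finset.mem_range.2 hl)).exists_eq_sum_laurentCoeff (by omega)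
  rw [hs, Finset.smul_sum]
  refine sum_mem fun m _ => nsmul_C_mul_mem ?_ (X_zpow_mem_integralLaurent N m)
  rw [laurentCoeff_component hW hf hl, ← nsmul_eq_mul, ← map_nsmul]
  exact laurentCoeff_mem_int hδf _

end LaurentCoefficients

section Evaluation

open Polynomial

universe u

variable {K L : Type u} [Field K] [Field L]

theorem eval_algebraMap_mul {φ : K →+* L} {z : L} {u : K[X]} (hu : u.eval₂ φ z ≠ 0)
    (f : RatFunc K) :
    RatFunc.eval φ z (algebraMap K[X] (RatFunc K) u * f) =
      u.eval₂ φ z * RatFunc.eval φ z f := by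
  by_cases hf : f.denom.eval₂ φ z = 0
  · have hdvd : f.denom ∣ u * (algebraMap K[X] (RatFunc K) u * f).denom := by
      have hu0 : u ≠ 0 := fun h => hu (h ▸ eval₂_zero φ z)
      have hinv : f = (algebraMap K[X] (RatFunc K) 1 / algebraMap K[X] (RatFunc K) u) *
          (algebraMap K[X] (RatFunc K) u * f) := by
        rw [map_one, one_div, inv_mul_cancel_left₀ (RatFunc.algebraMap_ne_zero hu0)]
      conv_lhs => rw [hinv]
      exact (RatFunc.denom_mul_dvd _ _).trans (mul_dvd_mul_right (RatFunc.denom_div_dvd _ _) _)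
    have huf := eval₂_eq_zero_of_dvd_of_eval₂_eq_zero φ z hdvd hf
    rw [eval₂_mul, mul_eq_zero, or_iff_right hu] at huf
    rw [RatFunc.eval_eq_zero_of_eval₂_denom_eq_zero huf,
      RatFunc.eval_eq_zero_of_eval₂_denom_eq_zero hf, mul_zero]
  · have hdenom : (algebraMap K[X] (RatFunc K) u).denom.eval₂ φ z ≠ 0 := by
      rw [RatFunc.denom_algebraMap, eval₂_one]
      exact one_ne_zero
    rw [RatFunc.eval_mul φ z hdenom hf, RatFunc.eval_algebraMap, Algebra.algebraMap_self_apply]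

/-- The ring of rational functions regular at `z` whose value at `z` lies in the subring `S`. -/
noncomputable def regularAtOver (φ : K →+* L) (z : L) (S : Subring L) :
    Subring (RatFunc K) where
  carrier := {f | f.denom.eval₂ φ z ≠ 0 ∧ RatFunc.eval φ z f ∈ S}
  zero_mem' := by simp
  one_mem' := by simp
  add_mem' := fun {f g} ⟨hf, hfS⟩ ⟨hg, hgS⟩ => by
    refine ⟨mt (eval₂_eq_zero_of_dvd_of_eval₂_eq_zero φ z (RatFunc.denom_add_dvd f g)) ?_, ?_⟩
    · rw [eval₂_mul]
      exact mul_ne_zero hf hg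
    · rw [RatFunc.eval_add φ z hf hg]
      exact add_mem hfS hgS
  mul_mem' := fun {f g} ⟨hf, hfS⟩ ⟨hg, hgS⟩ => by
    refine ⟨mt (eval₂_eq_zero_of_dvd_of_eval₂_eq_zero φ z (RatFunc.denom_mul_dvd f g)) ?_, ?_⟩
    · rw [eval₂_mul]
      exact mul_ne_zero hf hg
    · rw [RatFunc.eval_mul φ z hf hg]
      exact mul_mem hfS hgS
  neg_mem' := fun {f} ⟨hf, hfS⟩ => by
    have hneg : -f = algebraMap K[X] (RatFunc K) (-1) * f := by
      rw [map_neg, map_one, neg_one_mul]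
    refine ⟨mt (eval₂_eq_zero_of_dvd_of_eval₂_eq_zero φ z ?_) hf, ?_⟩
    · rw [RatFunc.denom_dvd f.denom_ne_zero]
      exact ⟨-f.num, by rw [map_neg, neg_div, RatFunc.num_div_denom]⟩
    · rw [hneg, eval_algebraMap_mul (by simp), eval₂_neg, eval₂_one, neg_one_mul]
      exact neg_mem hfS

theorem integralLaurent_le_regularAtOver {L : Type} [Field L] (φ : ℚ →+* L) {z : L}
    {S : Subring L} {N : ℕ} (hz : z ≠ 0) (hS : z ^ N ∈ S) (hS' : (z ^ N)⁻¹ ∈ S) :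
    integralLaurent N ≤ regularAtOver φ z S := by
  have hX : (RatFunc.X : RatFunc ℚ) ^ N = algebraMap ℚ[X] (RatFunc ℚ) (X ^ N) := by
    rw [map_pow, RatFunc.algebraMap_X]
  have heval : (X ^ N : ℚ[X]).eval₂ φ z = z ^ N := eval₂_X_pow φ z
  refine Subring.closure_le.2 ?_
  rintro _ (rfl | rfl)
  · rw [zpow_natCast, hX]
    constructor
    · rw [RatFunc.denom_algebraMap, eval₂_one]
      exact one_ne_zero
    · rwa [RatFunc.eval_algebraMap, Algebra.algebraMap_self_apply, heval]
  · rw [zpow_neg, zpow_natCast, hX]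
    constructor
    · refine mt (eval₂_eq_zero_of_dvd_of_eval₂_eq_zero φ z ?_) (heval.trans_ne (pow_ne_zero N hz))
      rw [← one_div, ← map_one (algebraMap ℚ[X] (RatFunc ℚ))]
      exact RatFunc.denom_div_dvd _ _
    · have hinv := eval_algebraMap_mul (heval.trans_ne (pow_ne_zero N hz))
        (algebraMap ℚ[X] (RatFunc ℚ) (X ^ N))⁻¹
      rw [mul_inv_cancel₀ (RatFunc.algebraMap_ne_zero (pow_ne_zero N X_ne_zero)),
        RatFunc.eval_one, heval] at hinv
      rwa [eq_inv_of_mul_eq_one_right hinv.symm]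

theorem natCast_mul_eval_mem {L : Type} [Field L] {φ : ℚ →+* L} {z : L} {S : Subring L} {N : ℕ}
    (hz : z ≠ 0) (hS : z ^ N ∈ S) (hS' : (z ^ N)⁻¹ ∈ S) {δ k : ℕ} (hδ : δ ≠ 0)
    {f : RatFunc ℚ} (hf : δ • (RatFunc.X ^ k * f) ∈ integralLaurent N) :
    δ * z ^ k * RatFunc.eval φ z f ∈ S := by
  have heval : (C (δ : ℚ) * X ^ k : ℚ[X]).eval₂ φ z = δ * z ^ k := by
    rw [eval₂_mul, eval₂_C, eval₂_X_pow, map_natCast]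
  have hmul : δ • (RatFunc.X ^ k * f) =
      algebraMap ℚ[X] (RatFunc ℚ) (C (δ : ℚ) * X ^ k) * f := by
    rw [map_mul, map_pow, RatFunc.algebraMap_X, RatFunc.algebraMap_C, map_natCast, nsmul_eq_mul,
      mul_assoc]
  have hne : (δ : L) * z ^ k ≠ 0 := by
    rw [← map_natCast φ]
    exact mul_ne_zero ((map_ne_zero φ).2 (Nat.cast_ne_zero.2 hδ)) (pow_ne_zero k hz)
  rw [← heval, ← eval_algebraMap_mul (heval.trans_ne hne), ← hmul]
  exact (integralLaurent_le_regularAtOver φ hz hS hS' hf).2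

theorem natCast_mul_eval_component_mem {L : Type} [Field L] {φ : ℚ →+* L} {z : L} {S : Subring L}
    {N : ℕ} (hz : z ≠ 0) (hS : z ^ N ∈ S) (hS' : (z ^ N)⁻¹ ∈ S) {δ k : ℕ} (hδ : δ ≠ 0)
    {f : RatFunc ℚ} (hf : δ • f ∈ integralAwayZeroOne) {W : ℕ → RatFunc ℚ}
    (hW : RatFunc.X ^ k * f = ∑ l ∈ Finset.range N, RatFunc.X ^ l * W l ∧
      ∀ l ∈ Finset.range N, InLaurentN N (W l)) {l : ℕ} (hl : l < N) :
    δ * RatFunc.eval φ z (W l) ∈ S := by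
  have hshift : δ • (RatFunc.X ^ k * f) ∈ integralAwayZeroOne := by
    rw [← mul_smul_comm]
    exact mul_mem (X_zpow_mem_integralAwayZeroOne k) hf
  have hcomp := nsmul_component_mem hshift hW.2 hW.1 hl
  rw [← one_mul (W l), ← pow_zero RatFunc.X] at hcomp
  simpa using natCast_mul_eval_mem (φ := φ) hz hS hS' hδ hcomp

end Evaluation

section SpanPowers

variable {k R ι : Type*} [CommRing k] [CommRing R] [Algebra k R] {x : ι → R} {S : Finset ι}

variable (k x S) in
/-- The `k`-module spanned by the powers `x i ^ j` with `i ∈ S` and `1 ≤ j ≤ a`. For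
`x i = c / (t - v i)` it consists of the partial fractions with poles of order at most `a`. -/
def spanPowers (a : ℕ) : Submodule k R :=
  Submodule.span k ((fun q : ι × ℕ => x q.1 ^ q.2) '' ↑(S ×ˢ Finset.Icc 1 a))

theorem pow_mem_spanPowers {i : ι} (hi : i ∈ S) {j a : ℕ} (hj : 1 ≤ j) (hja : j ≤ a) :
    x i ^ j ∈ spanPowers k x S a :=
  Submodule.subset_span ⟨(i, j), by simp [hi, hj, hja], rfl⟩

theorem spanPowers_mono {a b : ℕ} (hab : a ≤ b) : spanPowers k x S a ≤ spanPowers k x S b :=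
  Submodule.span_mono <| Set.image_mono <| Finset.coe_subset.2 <|
    Finset.product_subset_product_right <| Finset.Icc_subset_Icc_right hab

theorem pow_mul_mem_spanPowers
    (hx : (S : Set ι).Pairwise fun i i' => ∃ c : k, x i * x i' = c • (x i - x i'))
    {i i' : ι} (hi : i ∈ S) (hi' : i' ∈ S) (j : ℕ) : x i ^ j * x i' ∈ spanPowers k x S (j + 1) := by
  rcases eq_or_ne i i' with rfl | hne
  · rw [← pow_succ]
    exact pow_mem_spanPowers hi j.succ_pos le_rfl
  · obtain ⟨c, hc⟩ := hx hi hi' hne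
    induction j with
    | zero => simpa using pow_mem_spanPowers (k := k) (x := x) hi' le_rfl le_rfl
    | succ j ih =>
      have hsplit : x i ^ (j + 1) * x i' = c • (x i ^ (j + 1) - x i ^ j * x i') := by
        rw [pow_succ, mul_assoc, hc, mul_smul_comm, mul_sub]
      rw [hsplit]
      exact Submodule.smul_mem _ c (sub_mem (pow_mem_spanPowers hi j.succ_pos (by omega))
        (spanPowers_mono (by omega) ih))

theorem spanPowers_mul_spanPowers_one_le
    (hx : (S : Set ι).Pairwise fun i i' => ∃ c : k, x i * x i' = c • (x i - x i')) (a : ℕ) :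
    spanPowers k x S a * spanPowers k x S 1 ≤ spanPowers k x S (a + 1) := by
  rw [spanPowers, spanPowers, Submodule.span_mul_span, Submodule.span_le]
  rintro _ ⟨_, ⟨⟨i, j⟩, hij, rfl⟩, _, ⟨⟨i', j'⟩, hij', rfl⟩, rfl⟩
  simp only [Finset.coe_product, Set.mem_prod, Finset.mem_coe, Finset.mem_Icc] at hij hij'
  obtain rfl : j' = 1 := by omega
  simp only [pow_one]
  exact spanPowers_mono (by omega) (pow_mul_mem_spanPowers hx hij.1 hij'.1 j)

theorem spanPowers_one_pow_le
    (hx : (S : Set ι).Pairwise fun i i' => ∃ c : k, x i * x i' = c • (x i - x i'))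
    {a : ℕ} (ha : a ≠ 0) : spanPowers k x S 1 ^ a ≤ spanPowers k x S a := by
  induction a, Nat.one_le_iff_ne_zero.2 ha using Nat.le_induction with
  | base => rw [pow_one]
  | succ a ha ih =>
    rw [pow_succ]
    exact (mul_le_mul_left (ih (by omega)) _).trans
      (spanPowers_mul_spanPowers_one_le hx a)

theorem exists_eq_sum_of_mem_spanPowers {a : ℕ} {u : R} (hu : u ∈ spanPowers k x S a) :
    ∃ c : ℕ → ι → k, u = ∑ i ∈ S, ∑ j ∈ Finset.Icc 1 a, c j i • x i ^ j := by
  obtain ⟨c, rfl⟩ := (Submodule.mem_span_image_finset_iff_exists_fun' k).1 hu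
  exact ⟨fun j i => c (i, j), Finset.sum_product _ _ _⟩

theorem prod_mem_pow {M : Submodule k R} {s : Finset ι} (hx : ∀ i ∈ s, x i ∈ M) :
    ∏ i ∈ s, x i ∈ M ^ s.card := by
  classical
  induction s using Finset.induction_on with
  | empty => exact (Finset.card_empty (α := ι)).symm ▸ Submodule.one_le.1 le_rfl
  | insert i s hi ih =>
    rw [Finset.prod_insert hi, Finset.card_insert_of_notMem hi, pow_succ']
    exact Submodule.mul_mem_mul (hx i (by simp)) (ih fun j hj => hx j (by simp [hj]))

end SpanPowers

section SimplePoles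

open Polynomial

variable {K ι : Type*} [Field K] {S : Finset ι} {v : ι → K}

variable (S v) in
/-- The complement of the nodes `v i`, `i ∈ S`. Partial fractions with poles at the nodes are
treated as elements of the ring of `K`-valued functions on it. -/
abbrev NodeComplement : Type _ := {t : K // ∀ i ∈ S, t ≠ v i}

variable (S v) in
/-- The function `t ↦ c / (t - v i)` off the nodes. -/
def simplePole (c : K) (i : ι) : NodeComplement S v → K := fun t => c / (t.1 - v i)

theorem simplePole_mul_simplePole (c : K) {i i' : ι} (hi : i ∈ S) (hi' : i' ∈ S)
    (hne : v i ≠ v i') :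
    simplePole S v c i * simplePole S v c i' =
      (c / (v i - v i')) • (simplePole S v c i - simplePole S v c i') := by
  funext t
  have ht := sub_ne_zero.2 (t.2 i hi)
  have ht' := sub_ne_zero.2 (t.2 i' hi')
  have hv := sub_ne_zero.2 hne
  simp only [simplePole, Pi.mul_apply, Pi.smul_apply, Pi.sub_apply, smul_eq_mul]
  field_simp
  ring

theorem eval_div_prod_sub_eq_sum [DecidableEq ι] (hv : Set.InjOn v S) {Q : K[X]}
    (hQ : Q.degree < S.card) {t : K} (ht : ∀ i ∈ S, t ≠ v i) :
    Q.eval t / ∏ i ∈ S, (t - v i) =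
      ∑ i ∈ S, Lagrange.nodalWeight S v i * Q.eval (v i) / (t - v i) := by
  have hnodal := Lagrange.eval_interpolate_not_at_node (fun i => Q.eval (v i)) ht
  rw [← Lagrange.eq_interpolate hv hQ, Lagrange.eval_nodal] at hnodal
  rw [hnodal, mul_div_cancel_left₀ _
    (Finset.prod_ne_zero_iff.2 fun i hi => sub_ne_zero.2 (ht i hi))]
  refine Finset.sum_congr rfl fun i _ => ?_
  rw [div_eq_mul_inv]
  ring

theorem mul_eval_div_prod_sub_mem_spanPowers [DecidableEq ι] (hv : Set.InjOn v S) {Q : K[X]}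
    (hQ : Q.degree < S.card) (c : K) {e : K}
    (he : ∀ i ∈ S, e * Lagrange.nodalWeight S v i * Q.eval (v i) ∈ (⊥ : Subring K)) :
    (fun t : NodeComplement S v => c * e * Q.eval t.1 / ∏ i ∈ S, (t.1 - v i)) ∈
      spanPowers ℤ (simplePole S v c) S 1 := by
  simp only [Subring.mem_bot] at he
  choose! b hb using he
  have hsum : (fun t : NodeComplement S v =>
      c * e * Q.eval t.1 / ∏ i ∈ S, (t.1 - v i)) = ∑ i ∈ S, b i • simplePole S v c i ^ 1 := by
    funext t
    rw [mul_div_assoc, eval_div_prod_sub_eq_sum hv hQ t.2, Finset.mul_sum, Finset.sum_apply]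
    refine Finset.sum_congr rfl fun i hi => ?_
    rw [pow_one, Pi.smul_apply, simplePole, zsmul_eq_mul, hb i hi]
    ring
  rw [hsum]
  exact sum_mem fun i hi => Submodule.smul_mem _ _ (pow_mem_spanPowers hi le_rfl le_rfl)

variable (S v) in
/-- Polynomials as functions on the complement of the nodes. -/
noncomputable def evalNodeComplement : K[X] →+* (NodeComplement S v → K) :=
  RingHom.pi fun t => evalRingHom t.1

theorem evalNodeComplement_apply (Q : K[X]) (t : NodeComplement S v) :
    evalNodeComplement S v Q t = Q.eval t.1 := rfl

theorem evalNodeComplement_injective [Infinite K] :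
    Function.Injective (evalNodeComplement S v) := by
  classical
  intro P Q hPQ
  refine eq_of_infinite_eval_eq P Q ?_
  refine (S.image v).finite_toSet.infinite_compl.mono fun t ht => ?_
  refine congrFun hPQ ⟨t, fun i hi hti => ht ?_⟩
  exact Finset.mem_coe.2 (Finset.mem_image.2 ⟨i, hi, hti.symm⟩)

theorem simplePole_mul_evalNodeComplement {i : ι} (hi : i ∈ S) :
    simplePole S v 1 i * evalNodeComplement S v (X - C (v i)) = 1 := by
  funext t
  rw [Pi.mul_apply, simplePole, evalNodeComplement_apply, eval_sub, eval_X, eval_C,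
    div_mul_cancel₀ _ (sub_ne_zero.2 (t.2 i hi)), Pi.one_apply]

theorem sum_div_sub_pow_unique [Infinite K] (hv : Set.InjOn v S) {a : ℕ} {b c : ℕ → ι → K}
    (hbc : ∀ t, (∀ i ∈ S, t ≠ v i) →
      ∑ i ∈ S, ∑ j ∈ Finset.Icc 1 a, b j i / (t - v i) ^ j =
        ∑ i ∈ S, ∑ j ∈ Finset.Icc 1 a, c j i / (t - v i) ^ j)
    {i : ι} (hi : i ∈ S) {j : ℕ} (hj : j ∈ Finset.Icc 1 a) : b j i = c j i := by
  let := (evalNodeComplement S v).toAlgebra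
  have : FaithfulSMul K[X] (NodeComplement S v → K) :=
    (faithfulSMul_iff_algebraMap_injective _ _).2 evalNodeComplement_injective
  have hcoprime : (S : Set ι).Pairwise fun i i' => IsCoprime (X - C (v i)) (X - C (v i')) :=
    fun i hi i' hi' hne => isCoprime_X_sub_C_of_isUnit_sub
      (isUnit_iff_ne_zero.2 (sub_ne_zero.2 fun h => hne (hv hi hi' h)))
  have hreindex (f : ℕ → K) : ∑ j ∈ Finset.Icc 1 a, f j = ∑ l : Fin a, f (l + 1) := by
    rw [Fin.sum_univ_eq_sum_range fun l => f (l + 1), ← Finset.Ico_add_one_right_eq_Icc,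
      Finset.sum_Ico_eq_sum_range]
    simp only [Nat.add_sub_cancel, add_comm]
  have hdegree (d : ℕ → ι → K) : ∀ i ∈ S, ∀ l : Fin a,
      (C (d (l + 1) i)).degree < (X - C (v i)).degree := fun i _ l => by
    rw [degree_X_sub_C]
    exact degree_C_le.trans_lt zero_lt_one
  have hsum (d : ℕ → ι → K) (t : NodeComplement S v) :
      (evalNodeComplement S v 0 + ∑ i ∈ S, ∑ l : Fin a,
        evalNodeComplement S v (C (d (l + 1) i)) * simplePole S v 1 i ^ (l.1 + 1)) t =
          ∑ i ∈ S, ∑ j ∈ Finset.Icc 1 a, d j i / (t.1 - v i) ^ j := by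
    simp only [map_zero, zero_add, Finset.sum_apply, Pi.mul_apply, Pi.pow_apply, hreindex,
      simplePole, evalNodeComplement_apply, eval_C, div_pow, one_pow, mul_one_div]
  have hunique := (quo_add_sum_rem_mul_pow_inverse_unique (fun i _ => monic_X_sub_C (v i))
    hcoprime (fun i hi => simplePole_mul_evalNodeComplement hi) (hdegree b) (hdegree c)
    (funext fun t => (hsum b t).trans ((hbc t.1 t.2).trans (hsum c t).symm))).2 i hi
  obtain ⟨hj1, hja⟩ := Finset.mem_Icc.1 hj
  have hj' := congrFun hunique ⟨j - 1, by omega⟩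
  rwa [C_inj, Nat.sub_add_cancel hj1] at hj'

end SimplePoles

section ArithmeticProgression

open Polynomial

theorem prod_erase_range_natCast_sub {R : Type*} [CommRing R] {h m : ℕ} (hm : h ≤ m) :
    ∏ j ∈ (Finset.range (m + 1)).erase h, ((j : R) - h) =
      (-1) ^ h * h.factorial * (m - h).factorial := by
  induction m, hm using Nat.le_induction with
  | base =>
    have herase : (Finset.range (h + 1)).erase h = Finset.range h := by
      rw [Finset.range_add_one, Finset.erase_insert Finset.notMem_range_self]
    have hneg : ∀ j ∈ Finset.range h, (j : R) - h = -1 * ((h - j : ℕ) : R) := fun j hj => by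
      rw [Nat.cast_sub (Finset.mem_range.1 hj).le]
      ring
    rw [herase, Finset.prod_congr rfl hneg, Finset.prod_mul_distrib, Finset.prod_const,
      Finset.card_range, ← Nat.cast_prod, ← Nat.descFactorial_eq_prod_range,
      Nat.descFactorial_self, Nat.sub_self, Nat.factorial_zero, Nat.cast_one, mul_one]
  | succ m hm ih =>
    rw [Finset.range_add_one, Finset.erase_insert_of_ne (by omega),
      Finset.prod_insert (by simp), ih, Nat.sub_add_comm hm, Nat.factorial_succ]
    push_cast [Nat.cast_sub hm]
    ring

theorem nodalWeight_neg_mul_range {K : Type*} [Field K] [CharZero K] (c : K) {h m : ℕ}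
    (hm : h ≤ m) :
    Lagrange.nodalWeight (Finset.range (m + 1)) (fun i : ℕ => -(c * i)) h =
      (-1) ^ h * m.choose h / (c ^ m * m.factorial) := by
  have hdiff : ∀ j ∈ (Finset.range (m + 1)).erase h,
      -(c * (h : K)) - -(c * j) = c * ((j : K) - h) := fun j _ => by ring
  have hcard : ((Finset.range (m + 1)).erase h).card = m := by
    rw [Finset.card_erase_of_mem (Finset.mem_range.2 (by omega)), Finset.card_range,
      Nat.add_sub_cancel]
  rw [Lagrange.nodalWeight, Finset.prod_inv_distrib, Finset.prod_congr rfl hdiff,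
    Finset.prod_mul_distrib, Finset.prod_const, hcard, prod_erase_range_natCast_sub hm,
    ← Nat.choose_mul_factorial_mul_factorial hm]
  have hsign : ((-1 : K) ^ h) ^ 2 = 1 := by rw [pow_right_comm, neg_one_sq, one_pow]
  have hchoose : (m.choose h : K) ≠ 0 := Nat.cast_ne_zero.2 (Nat.choose_pos hm).ne'
  push_cast
  field_simp
  rw [hsign]

theorem exists_eval_ascPochhammer_intCast (c : ℤ) (m : ℕ) :
    ∃ b : ℤ, (ascPochhammer ℚ m).eval (c : ℚ) = b * m.factorial := by
  refine ⟨Ring.multichoose c m, ?_⟩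
  have h := Ring.factorial_nsmul_multichoose_eq_ascPochhammer c m
  rw [ascPochhammer_smeval_eq_eval, nsmul_eq_mul] at h
  rw [← ascPochhammer_map (Int.castRingHom ℚ), eval_intCast_map, Int.cast_id, ← h, map_mul,
    mul_comm]
  simp

theorem ascPochhammer_mul_eval {R : Type*} [CommRing R] (m b : ℕ) (y : R) :
    (ascPochhammer R (b * m)).eval y =
      ∏ i ∈ Finset.range b, (ascPochhammer R m).eval (y + i * m) := by
  induction b with
  | zero => simp
  | succ b ih =>
    rw [Finset.prod_range_succ, ← ih, Nat.succ_mul, ← ascPochhammer_mul]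
    simp

/-- The poles `0, -N, -2N, …` of `F`. -/
def pole (N h : ℕ) : ℚ := -(N * h)

theorem sub_pole (N h : ℕ) (t : ℚ) : t - pole N h = t + N * h := sub_neg_eq_add _ _

theorem pole_injective {N : ℕ} (hN : N ≠ 0) : Function.Injective (pole N) := fun i j hij => by
  simpa [pole, hN] using hij

variable {N m D : ℕ}

theorem simplePole_pole_mul (hN : N ≠ 0) (hD : ∀ k ∈ Finset.Icc 1 m, k ∣ D) :
    (Finset.range (m + 1) : Set ℕ).Pairwise fun h h' =>
      ∃ c : ℤ, simplePole (Finset.range (m + 1)) (pole N) (D * N) h *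
        simplePole (Finset.range (m + 1)) (pole N) (D * N) h' =
          c • (simplePole (Finset.range (m + 1)) (pole N) (D * N) h -
            simplePole (Finset.range (m + 1)) (pole N) (D * N) h') := by
  intro h hh h' hh' hne
  have hlt := Finset.mem_range.1 (Finset.mem_coe.1 hh)
  have hlt' := Finset.mem_range.1 (Finset.mem_coe.1 hh')
  obtain ⟨c, hc⟩ : (h' - h : ℤ) ∣ D := Int.natAbs_dvd.1 <| Int.natCast_dvd_natCast.2 <|
    hD _ (Finset.mem_Icc.2 ⟨by omega, by omega⟩)
  have hratio : (D * N : ℚ) / (pole N h - pole N h') = c := by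
    have hsub : (h' - h : ℚ) ≠ 0 := sub_ne_zero.2 (Nat.cast_injective.ne hne.symm)
    have hDc : (D : ℚ) = (h' - h) * c := by exact_mod_cast hc
    have hpole : pole N h - pole N h' = (h' - h) * N := by
      rw [pole, pole]
      ring
    have hN' : (N : ℚ) ≠ 0 := Nat.cast_ne_zero.2 hN
    rw [hDc, hpole]
    field_simp
  refine ⟨c, ?_⟩
  rw [simplePole_mul_simplePole _ hh hh' ((pole_injective hN).ne hne), hratio,
    Int.cast_smul_eq_zsmul]

/-- The function `t ↦ D N^{m+1} Q(t) / (t (t + N) ⋯ (t + mN))`. A suitable multiple of `F` is a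
product of `a` functions of this shape. -/
noncomputable def progressionFraction (N m D : ℕ) (Q : ℚ[X]) :
    NodeComplement (Finset.range (m + 1)) (pole N) → ℚ :=
  fun t => D * N * N ^ m * Q.eval t.1 / ∏ h ∈ Finset.range (m + 1), (t.1 - pole N h)

theorem progressionFraction_mem (hN : N ≠ 0) {Q : ℚ[X]} (hQ : Q.natDegree ≤ m)
    (hval : ∀ h, ∃ b : ℤ, Q.eval (pole N h) = b * m.factorial) :
    progressionFraction N m D Q ∈
      spanPowers ℤ (simplePole (Finset.range (m + 1)) (pole N) (D * N)) (Finset.range (m + 1))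
        1 := by
  have hdeg : Q.degree < (Finset.range (m + 1)).card := by
    rw [Finset.card_range]
    exact degree_le_natDegree.trans_lt (by exact_mod_cast Nat.lt_succ_of_le hQ)
  refine mul_eval_div_prod_sub_mem_spanPowers (pole_injective hN).injOn hdeg _ fun h hh => ?_
  obtain ⟨b, hb⟩ := hval h
  have hweight := nodalWeight_neg_mul_range (N : ℚ) (Finset.mem_range_succ_iff.1 hh)
  refine Subring.mem_bot.2 ⟨(-1) ^ h * m.choose h * b, ?_⟩
  rw [hb]
  change _ = (N : ℚ) ^ m *
    Lagrange.nodalWeight (Finset.range (m + 1)) (fun i : ℕ => -((N : ℚ) * i)) h * _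
  rw [hweight]
  push_cast
  field_simp

theorem progressionFraction_factorial_mem (hN : N ≠ 0) :
    progressionFraction N m D (C (m.factorial : ℚ)) ∈
      spanPowers ℤ (simplePole (Finset.range (m + 1)) (pole N) (D * N)) (Finset.range (m + 1))
        1 :=
  progressionFraction_mem hN (by simp) fun h => ⟨1, by simp⟩

theorem progressionFraction_ascPochhammer_mem (hN : N ≠ 0) (c : ℤ) :
    progressionFraction N m D ((ascPochhammer ℚ m).comp (X + C (c : ℚ))) ∈
      spanPowers ℤ (simplePole (Finset.range (m + 1)) (pole N) (D * N)) (Finset.range (m + 1))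
        1 := by
  refine progressionFraction_mem hN ?_ fun h => ?_
  · rw [natDegree_comp, natDegree_X_add_C, ascPochhammer_natDegree, mul_one]
  · obtain ⟨b, hb⟩ := exists_eval_ascPochhammer_intCast (-(N * h) + c) m
    refine ⟨b, ?_⟩
    rw [← hb]
    simp [pole]

theorem Frat_eq_prod_progressionFraction (hN : N ≠ 0) {a b r : ℕ} (hb : a = b + r * N + r * N)
    (t : NodeComplement (Finset.range (m + 1)) (pole N)) :
    (D ^ a * N ^ (a * (m + 1)) : ℚ) * Frat a r N (N * m) t.1 =
      (progressionFraction N m D (C (m.factorial : ℚ)) ^ b *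
        (∏ i ∈ Finset.range (r * N), progressionFraction N m D
          ((ascPochhammer ℚ m).comp (X + C ((-(r * N * m) + i * m : ℤ) : ℚ)))) *
        ∏ i ∈ Finset.range (r * N), progressionFraction N m D
          ((ascPochhammer ℚ m).comp (X + C ((N * m + 1 + i * m : ℤ) : ℚ)))) t := by
  have hnum (c : ℤ) : (ascPochhammer ℚ (r * (N * m))).eval (t.1 + c) =
      ∏ i ∈ Finset.range (r * N),
        ((ascPochhammer ℚ m).comp (X + C ((c + i * m : ℤ) : ℚ))).eval t.1 := by
    rw [← mul_assoc, ascPochhammer_mul_eval]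
    refine Finset.prod_congr rfl fun i _ => ?_
    rw [eval_comp, eval_add, eval_X, eval_C]
    push_cast
    rw [add_assoc]
  have hfst := hnum (-(r * N * m))
  have hsnd := hnum (N * m + 1)
  have hsub : a - 2 * r * N = b := by
    rw [hb, mul_assoc]
    omega
  have hargFst : t.1 - r * (N * m : ℕ) = t.1 + (-(r * N * m) : ℤ) := by
    push_cast
    ring
  have hargSnd : t.1 + (N * m : ℕ) + 1 = t.1 + (N * m + 1 : ℤ) := by
    push_cast
    ring
  rw [Frat, Nat.mul_div_cancel_left m (Nat.pos_of_ne_zero hN), hsub, hargFst, hargSnd, hfst, hsnd,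
    hb]
  simp only [Pi.mul_apply, Pi.pow_apply, Finset.prod_apply, progressionFraction, ← sub_pole,
    Finset.prod_mul_distrib, Finset.prod_const, Finset.card_range, Finset.prod_pow, eval_C,
    div_eq_mul_inv]
  ring

theorem mul_Frat_mem_spanPowers (hN : N ≠ 0) (hD : ∀ k ∈ Finset.Icc 1 m, k ∣ D) {a r : ℕ}
    (hra : 2 * r * N < a) :
    (fun t => (D ^ a * N ^ (a * (m + 1)) : ℚ) * Frat a r N (N * m) t.1) ∈
      spanPowers ℤ (simplePole (Finset.range (m + 1)) (pole N) (D * N)) (Finset.range (m + 1))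
        a := by
  obtain ⟨b, hb⟩ : ∃ b, a = b + r * N + r * N := ⟨a - r * N - r * N, by
    have : 2 * r * N = r * N + r * N := by ring
    omega⟩
  rw [funext (Frat_eq_prod_progressionFraction hN hb)]
  refine spanPowers_one_pow_le (simplePole_pole_mul hN hD) (by omega) ?_
  rw [hb, pow_add, pow_add]
  have hprod (c : ℕ → ℤ) :=
    prod_mem_pow (s := Finset.range (r * N)) fun i _ =>
      progressionFraction_ascPochhammer_mem (m := m) (D := D) hN (c i)
  simp only [Finset.card_range] at hprod
  exact Submodule.mul_mem_mul (Submodule.mul_mem_mul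
    (Submodule.pow_mem_pow _ (progressionFraction_factorial_mem hN) b) (hprod _)) (hprod _)

end ArithmeticProgression

section Denominators

theorem dvd_dlcm_s16 {k n : ℕ} (hk : k ∈ Finset.Icc 1 n) : k ∣ dlcm n :=
  Finset.dvd_lcm (f := id) hk

theorem dlcm_ne_zero (n : ℕ) : dlcm n ≠ 0 := by
  rw [dlcm, Ne, Finset.lcm_eq_zero_iff]
  simp

theorem cast_deltan_eq (a N n : ℕ) :
    (deltan a N n : ℚ) = (dlcm n : ℚ) ^ a * N ^ (a * (n / N + 1)) := by
  rw [deltan]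
  push_cast
  ring

theorem deltan_ne_zero {N : ℕ} (hN : N ≠ 0) (a n : ℕ) : deltan a N n ≠ 0 :=
  mul_ne_zero (pow_ne_zero _ (mul_ne_zero hN (dlcm_ne_zero n))) (pow_ne_zero _ hN)

variable {a r N n : ℕ} {p : ℕ → ℕ → ℚ}

theorem exists_deltan_mul_coeff_eq (hN : N ≠ 0) (hra : 2 * r * N < a) (hNn : N ∣ n)
    (hp : IsPartialFractionCoeffs a r N n p) {h j : ℕ} (hh : h ≤ n / N)
    (hj : j ∈ Finset.Icc 1 a) :
    ∃ c : ℤ, (deltan a N n : ℚ) * p j h = c * (dlcm n * N) ^ j := by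
  have hD : ∀ k ∈ Finset.Icc 1 (n / N), k ∣ dlcm n := fun k hk =>
    dvd_dlcm_s16 (Finset.Icc_subset_Icc_right (Nat.div_le_self n N) hk)
  obtain ⟨c, hc⟩ := exists_eq_sum_of_mem_spanPowers (mul_Frat_mem_spanPowers hN hD hra)
  rw [← cast_deltan_eq, Nat.mul_div_cancel' hNn] at hc
  refine ⟨c j h, sum_div_sub_pow_unique (S := Finset.range (n / N + 1)) (v := pole N)
    (b := fun j h => deltan a N n * p j h) (c := fun j h => c j h * (dlcm n * N : ℚ) ^ j)
    (pole_injective hN).injOn (fun t ht => ?_) (Finset.mem_range_succ_iff.2 hh) hj⟩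
  have hne : ∀ h ∈ Finset.range (n / N + 1), t + N * h ≠ 0 := fun h hh => by
    rw [← sub_pole]
    exact sub_ne_zero.2 (ht h hh)
  have hexp := congrFun hc ⟨t, ht⟩
  simp only [hp t hne, Finset.mul_sum, Finset.sum_apply, zsmul_eq_mul, Pi.mul_apply,
    Pi.intCast_apply, Pi.pow_apply, simplePole, div_pow, ← sub_pole, ← mul_div_assoc] at hexp
  exact hexp

theorem deltan_mul_coeff_mem (hN : N ≠ 0) (hra : 2 * r * N < a) (hNn : N ∣ n)
    (hp : IsPartialFractionCoeffs a r N n p) {h j : ℕ} (hh : h ≤ n / N)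
    (hj : j ∈ Finset.Icc 1 a) : (deltan a N n : ℚ) * p j h ∈ (⊥ : Subring ℚ) := by
  obtain ⟨c, hc⟩ := exists_deltan_mul_coeff_eq hN hra hNn hp hh hj
  rw [hc]
  exact mul_mem (intCast_mem _ c) (pow_mem (mul_mem (natCast_mem _ _) (natCast_mem _ _)) j)

theorem deltan_mul_coeff_div_mem (hN : N ≠ 0) (hra : 2 * r * N < a) (hNn : N ∣ n)
    (hp : IsPartialFractionCoeffs a r N n p) {h j k : ℕ} (hh : h ≤ n / N)
    (hj : j ∈ Finset.Icc 1 a) (hk : k ∈ Finset.Icc 1 n) :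
    (deltan a N n : ℚ) * (p j h / k ^ j) ∈ (⊥ : Subring ℚ) := by
  obtain ⟨c, hc⟩ := exists_deltan_mul_coeff_eq hN hra hNn hp hh hj
  obtain ⟨e, he⟩ := dvd_dlcm_s16 hk
  have hk0 : (k : ℚ) ≠ 0 := Nat.cast_ne_zero.2 (by have := (Finset.mem_Icc.1 hk).1; omega)
  have hquot : (deltan a N n : ℚ) * (p j h / k ^ j) = c * (e * N) ^ j := by
    rw [← mul_div_assoc, hc, he, div_eq_iff (pow_ne_zero j hk0)]
    push_cast
    ring
  rw [hquot]
  exact mul_mem (intCast_mem _ c) (pow_mem (mul_mem (natCast_mem _ _) (natCast_mem _ _)) j)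

theorem deltan_nsmul_PPk_zero_mem (hN : N ≠ 0) (hra : 2 * r * N < a) (hNn : N ∣ n)
    (hp : IsPartialFractionCoeffs a r N n p) (j : ℕ) :
    deltan a N n • PPk a N n p 0 j ∈ integralLaurent N := by
  rw [PPk, Ppoly]
  split_ifs with hj
  · simp only [map_sum, map_mul, map_pow, RatFunc.algebraMap_C, RatFunc.algebraMap_X,
      Finset.smul_sum]
    refine sum_mem fun h hh => nsmul_C_mul_mem
      (deltan_mul_coeff_mem hN hra hNn hp (Finset.mem_range_succ_iff.1 hh)
        (Finset.mem_Icc.2 hj)) ?_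
    exact_mod_cast X_zpow_mem_integralLaurent N h
  · rw [map_zero, smul_zero]
    exact zero_mem _

theorem nsmul_algebraMap_sum_mem_integralAwayZeroOne {δ : ℕ} {s : Finset ℕ} {c : ℕ → ℚ}
    (hc : ∀ t ∈ s, δ * c t ∈ (⊥ : Subring ℚ)) :
    δ • algebraMap (Polynomial ℚ) (RatFunc ℚ)
      (∑ t ∈ s, Polynomial.C (c t) * Polynomial.X ^ t) ∈ integralAwayZeroOne := by
  simp only [map_sum, map_mul, map_pow, RatFunc.algebraMap_C, RatFunc.algebraMap_X,
    Finset.smul_sum]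
  refine sum_mem fun t ht => nsmul_C_mul_mem (hc t ht) ?_
  exact_mod_cast X_zpow_mem_integralAwayZeroOne t

theorem deltan_nsmul_UkF_zero_mem (hN : N ≠ 0) (hra : 2 * r * N < a) (hNn : N ∣ n)
    (hp : IsPartialFractionCoeffs a r N n p) :
    deltan a N n • UkF a N n p 0 ∈ integralAwayZeroOne := by
  rw [UkF, Upoly, map_neg, smul_neg]
  refine neg_mem (nsmul_algebraMap_sum_mem_integralAwayZeroOne fun t ht => ?_)
  simp only [Finset.mul_sum]
  refine sum_mem fun j hj => sum_mem fun h hh => ?_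
  rw [Finset.mem_Icc] at ht
  have hle : h * N ≤ t - 1 :=
    (Nat.le_div_iff_mul_le (Nat.pos_of_ne_zero hN)).1 (Finset.mem_range_succ_iff.1 hh)
  have hcast : (t : ℚ) - N * h = (t - h * N : ℕ) := by
    rw [Nat.cast_sub (by omega), Nat.cast_mul, mul_comm]
  rw [hcast]
  exact deltan_mul_coeff_div_mem hN hra hNn hp
    ((Nat.le_div_iff_mul_le (Nat.pos_of_ne_zero hN)).2 (by omega)) hj
    (Finset.mem_Icc.2 ⟨by omega, by omega⟩)

theorem deltan_nsmul_VkF_zero_mem (hN : N ≠ 0) (hra : 2 * r * N < a) (hNn : N ∣ n)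
    (hp : IsPartialFractionCoeffs a r N n p) :
    deltan a N n • VkF a N n p 0 ∈ integralAwayZeroOne := by
  rw [VkF, Vpoly, map_neg, smul_neg]
  refine neg_mem (nsmul_algebraMap_sum_mem_integralAwayZeroOne fun t _ => ?_)
  simp only [Finset.mul_sum]
  refine sum_mem fun j hj => sum_mem fun h hh => ?_
  rw [Finset.mem_Icc] at hh
  have hlt : t + N < (h + 1) * N :=
    (Nat.div_lt_iff_lt_mul (Nat.pos_of_ne_zero hN)).1 (Nat.lt_succ_of_le hh.1)
  have hle : h * N ≤ n := (Nat.le_div_iff_mul_le (Nat.pos_of_ne_zero hN)).1 hh.2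
  rw [Nat.succ_mul] at hlt
  have hcast : (N * h : ℚ) - t = (h * N - t : ℕ) := by
    rw [Nat.cast_sub (by omega), Nat.cast_mul, mul_comm]
  rw [hcast]
  exact deltan_mul_coeff_div_mem hN hra hNn hp hh.2 hj (Finset.mem_Icc.2 ⟨by omega, by omega⟩)

end Denominators

theorem linear_form_coefficients_are_integers_general {L : Type} [Field L] {φ : ℚ →+* L}
    {S : Subring L} {a r N n : ℕ} (hN : N ≠ 0) (hra : 2 * r * N < a) (hNn : N ∣ n)
    {z : L} (hz : z ≠ 0) (hS : z ^ N ∈ S) (hS' : (z ^ N)⁻¹ ∈ S) {pp : ℕ} {p : ℕ → ℕ → ℚ}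
    (hp : IsPartialFractionCoeffs a r N n p) {k : ℕ} {Uc Vc : ℕ → RatFunc ℚ}
    (hUc : RatFunc.X ^ k * UkF a N n p k = ∑ l ∈ Finset.range N, RatFunc.X ^ l * Uc l ∧
      ∀ l ∈ Finset.range N, InLaurentN N (Uc l))
    (hVc : RatFunc.X ^ k * VkF a N n p k = ∑ l ∈ Finset.range N, RatFunc.X ^ l * Vc l ∧
      ∀ l ∈ Finset.range N, InLaurentN N (Vc l))
    {s : ℕ → L}
    (hs1 : ∀ i, 1 ≤ i → i ≤ a →
      s i = deltan a N n * z ^ k * RatFunc.eval φ z (PPk a N n p k i))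
    (hs2 : ∀ l, l < N →
      s (a + 1 + l) = deltan a N n *
        (RatFunc.eval φ z (Uc l) + (-1) ^ pp * RatFunc.eval φ z (Vc ((N - l) % N)))) :
    ∀ i ∈ Finset.Icc 1 (a + N), s i ∈ S := by
  have hδ := deltan_ne_zero hN a n
  have hP := deltan_nsmul_PPk_zero_mem hN hra hNn hp
  have hU := nsmul_UkF_mem hP (deltan_nsmul_UkF_zero_mem hN hra hNn hp) k
  have hV := nsmul_VkF_mem hP (deltan_nsmul_VkF_zero_mem hN hra hNn hp) k
  intro i hi
  rw [Finset.mem_Icc] at hi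
  obtain hia | ⟨l, rfl⟩ : i ≤ a ∨ ∃ l, i = a + 1 + l :=
    (le_or_gt i a).imp_right fun h => Nat.exists_eq_add_of_le h
  · rw [hs1 i hi.1 hia]
    exact natCast_mul_eval_mem hz hS hS' hδ (nsmul_X_pow_mul_PPk_mem hP k i)
  · have hl : l < N := by omega
    rw [hs2 l hl, mul_add, mul_left_comm]
    exact add_mem
      (natCast_mul_eval_component_mem hz hS hS' hδ hU hUc hl)
      (mul_mem (pow_mem (neg_mem (one_mem S)) pp)
        (natCast_mul_eval_component_mem hz hS hS' hδ hV hVc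
          (Nat.mod_lt _ (Nat.pos_of_ne_zero hN))))

theorem ne_zero_and_pow_mem_bot_and_inv_mem_bot {N : ℕ} (hN : N ≠ 0) {z : ℂ}
    (hz : z = 1 ∨ z = Complex.exp (Real.pi * Complex.I / N)) :
    z ≠ 0 ∧ z ^ N ∈ (⊥ : Subring ℂ) ∧ (z ^ N)⁻¹ ∈ (⊥ : Subring ℂ) := by
  obtain rfl | rfl := hz
  · rw [one_pow, inv_one]
    exact ⟨one_ne_zero, one_mem _, one_mem _⟩
  · rw [← Complex.exp_nat_mul, mul_div_cancel₀ _ (Nat.cast_ne_zero.2 hN), Complex.exp_pi_mul_I,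
      inv_neg_one]
    exact ⟨Complex.exp_ne_zero _, neg_mem (one_mem _), neg_mem (one_mem _)⟩

/-- Let `a, r, N, n` be positive integers with `2rN < a` and `N ∣ n`, let
`z₀ ∈ {1, e^{iπ/N}}` and `p ∈ {0,1}`, set `d₀ = a(n/N+1) - 2rn`, and for
`1 ≤ k ≤ d₀-1` let `U_{k,λ}, V_{k,λ} ∈ ℚ[z^N, z^{-N}]` be the components of the
decompositions `z^{k-1}U_k(z) = ∑_{λ<N} z^λ U_{k,λ}(z)`,
`z^{k-1}V_k(z) = ∑_{λ<N} z^λ V_{k,λ}(z)`. Define `s_{k,i} = δ_n z₀^{k-1} P_{k,i}(z₀)`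
for `1 ≤ i ≤ a` and `s_{k,a+1+λ} = δ_n (U_{k,λ}(z₀) + (-1)^p V_{k,N-λ}(z₀))` for
`0 ≤ λ ≤ N-1` (with `V_{k,N} = V_{k,0}`). Then every `s_{k,i}` is a rational integer. -/
theorem linear_form_coefficients_are_integers
    (a r N n : ℕ) (ha : 0 < a) (hr : 0 < r) (hN : 0 < N) (hn : 0 < n)
    (hra : 2 * r * N < a) (hNn : N ∣ n)
    (z₀ : ℂ) (hz₀ : z₀ = 1 ∨ z₀ = Complex.exp (Real.pi * Complex.I / N))
    (pp : ℕ) (hpp : pp = 0 ∨ pp = 1)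
    (p : ℕ → ℕ → ℚ) (hp : IsPartialFractionCoeffs a r N n p)
    (Uc Vc : ℕ → ℕ → RatFunc ℚ)
    (hUc : ∀ k : ℕ, 1 ≤ k → k + 1 ≤ a * (n / N + 1) - 2 * r * n →
      RatFunc.X ^ (k - 1) * UkF a N n p (k - 1)
        = ∑ l ∈ Finset.range N, RatFunc.X ^ l * Uc k l ∧
      ∀ l ∈ Finset.range N, InLaurentN N (Uc k l))
    (hVc : ∀ k : ℕ, 1 ≤ k → k + 1 ≤ a * (n / N + 1) - 2 * r * n →
      RatFunc.X ^ (k - 1) * VkF a N n p (k - 1)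
        = ∑ l ∈ Finset.range N, RatFunc.X ^ l * Vc k l ∧
      ∀ l ∈ Finset.range N, InLaurentN N (Vc k l))
    (s : ℕ → ℕ → ℂ)
    (hs1 : ∀ k i : ℕ, 1 ≤ i → i ≤ a →
      s k i = (deltan a N n : ℂ) * z₀ ^ (k - 1) *
        RatFunc.eval (algebraMap ℚ ℂ) z₀ (PPk a N n p (k - 1) i))
    (hs2 : ∀ k l : ℕ, l < N →
      s k (a + 1 + l) = (deltan a N n : ℂ) *
        (RatFunc.eval (algebraMap ℚ ℂ) z₀ (Uc k l) +
          (-1) ^ pp * RatFunc.eval (algebraMap ℚ ℂ) z₀ (Vc k ((N - l) % N)))) :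
    ∀ k : ℕ, 1 ≤ k → k + 1 ≤ a * (n / N + 1) - 2 * r * n →
      ∀ i ∈ Finset.Icc 1 (a + N), ∃ m : ℤ, s k i = (m : ℂ) := by
  obtain ⟨hz, hS, hS'⟩ := ne_zero_and_pow_mem_bot_and_inv_mem_bot hN.ne' hz₀
  exact fun k hk hk' i hi => (Subring.mem_bot.1 <| linear_form_coefficients_are_integers_general
    hN.ne' hra hNn hz hS hS' hp (hUc k hk hk') (hVc k hk hk') (hs1 k) (hs2 k) i hi).imp
      fun _ => Eq.symm
end
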